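/- arXiv:1602.09025 — 4 statements merged into one kernel-verified Lean document; each statement's English description precedes it below -/
import Mathlib

section
/- Let φ : ℕ → ℝ be any function with φ(n) → 0 as n → ∞. Then there exists an integrable function f ∈ L¹(𝕋) such that for almost every x ∈ 𝕋 the estimate S_n f(x) − S_m f(x) = O(φ(|m − n|) log |m − n|) fails; that is, for almost every x there is no constant C such that |S_n f(x) − S_m f(x)| ≤ C φ(|m − n|) log |m − n| for all m, n with |m − n| ≥ 2. -/
/-!
The function `f` is a sum of blocks `2⁻ʲ Re (e(M_j x) P_j(x))`, where `P_j` is a trigonometric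
polynomial with `‖P_j‖₁ ≤ 1` and the frequencies `M_j` are so far apart that the blocks have
disjoint spectra. Increments of the partial sums of `f` inside the `j`-th frequency band then only
involve `P_j` (`exists_glued`), and no interaction between blocks has to be estimated.

A block of width `N` (`exists_block`) is a smoothed average of `N` point masses placed near the
points `-i / N`. The increment `S_{n+N} - S_n` of such an average is, up to `O(1)` and unimodular
factors, `(1 - e(N x)) (1 / N) ∑ i, σ_i / (1 - e(x + i / N))`, where the signs `σ_i = e(-n y_i)` come
from the positions `y_i` of the masses. The positions can be chosen such that every sign pattern
occurs for some `n` (`exists_signed_points`). With the signs of the imaginary parts, the sum is as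
large as a harmonic sum, hence comparable to `log N` (`log_le_sum_inv_norm`). In total, for every
`x` some increment of length `N` of the block is at least `sin² (2π N x) log N / (6π) - 2` in
absolute value.

The set where `|sin (2π N x)| < τ_j` has measure at most `2⁻ʲ` for suitable `τ_j > 0` not depending
on `N` (`exists_small_im_set`). As `φ → 0`, the width `N = N_j` can afterwards be taken so large that
the `j`-th increment exceeds `j |φ(N)| log N` off this set (`exists_width`). By Borel–Cantelli almost
every `x` lies in only finitely many of the exceptional sets, which rules out every constant `C`.
-/

open MeasureTheory Filter AddCircle
open scoped ENNReal

instance : Fact ((0:ℝ) < 1) := ⟨zero_lt_one⟩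

/-- The `n`-th symmetric partial sum of the Fourier series of `f` on the circle `𝕋 = ℝ/ℤ`:
`S_n f (x) = ∑_{|j| ≤ n} f̂(j) e^{2πijx}`. -/
noncomputable def fourierPartialSum (f : AddCircle (1:ℝ) → ℂ) (n : ℕ) (x : AddCircle (1:ℝ)) : ℂ :=
  ∑ j ∈ Finset.Icc (-(n:ℤ)) (n:ℤ), fourierCoeff f j * fourier j x

/-! ### Fejér kernels -/


lemma integrable_of_cont {F : AddCircle (1:ℝ) → ℂ} (hF : Continuous F) :
    Integrable F haarAddCircle := by
  exact hF.integrable_of_hasCompactSupport (HasCompactSupport.of_compactSpace _)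

/-- Trigonometric polynomials `F` of degree less than `L`, of `L¹` norm at most one, whose
coefficients of index `0, …, R` are within `η` of `1`. Fejér kernels of high order do this: they
are nonnegative with integral `1`, and their `r`-th coefficient is `1 - r / L`. -/
lemma exists_fejer (R : ℕ) {η : ℝ} (hη : 0 < η) :
    ∃ L : ℕ, R < L ∧ ∃ F : AddCircle (1:ℝ) → ℂ, Continuous F ∧
      (∫ x, ‖F x‖ ∂haarAddCircle) ≤ 1 ∧
      (∀ r : ℤ, (L : ℤ) ≤ |r| → fourierCoeff F r = 0) ∧
      ∀ r : ℕ, r ≤ R → ‖fourierCoeff F (r : ℤ) - 1‖ ≤ η := by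
  obtain ⟨L, hL⟩ := exists_nat_gt (max (R : ℝ) (R / η))
  have hRL : (R : ℝ) < L := (le_max_left _ _).trans_lt hL
  have hRη : (R : ℝ) / η < L := (le_max_right _ _).trans_lt hL
  have hL0 : (0 : ℝ) < L := lt_of_le_of_lt (Nat.cast_nonneg R) hRL
  have hLc : (L : ℂ) ≠ 0 := by exact_mod_cast hL0.ne'
  let F : AddCircle (1:ℝ) → ℂ := fun x =>
    (1 / (L : ℂ)) * ∑ a ∈ Finset.range L, ∑ b ∈ Finset.range L, fourier ((a : ℤ) - b) x
  have hFc : Continuous F := by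
    refine continuous_const.mul ?_
    exact continuous_finsetSum _ fun a _ => continuous_finsetSum _ fun b _ =>
      (fourier ((a : ℤ) - b)).continuous
  have hcoeff : ∀ r : ℤ, fourierCoeff F r = (1 / (L : ℂ)) *
      ∑ a ∈ Finset.range L, ∑ b ∈ Finset.range L, if (a : ℤ) - b = r then 1 else 0 := by
    intro r
    have hint : ∀ n : ℤ, Integrable (fun x : AddCircle (1:ℝ) => fourier n x) haarAddCircle :=
      fun n => integrable_of_cont (fourier n).continuous
    have h1 := fourierCoeff.const_mul (fun x : AddCircle (1:ℝ) =>
      ∑ a ∈ Finset.range L, ∑ b ∈ Finset.range L, fourier ((a : ℤ) - b) x) (1 / (L : ℂ)) r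
    have h2 : fourierCoeff (fun x : AddCircle (1:ℝ) =>
      ∑ a ∈ Finset.range L, ∑ b ∈ Finset.range L, fourier ((a : ℤ) - b) x) r =
      ∑ a ∈ Finset.range L, ∑ b ∈ Finset.range L, if (a : ℤ) - b = r then 1 else 0 := by
      simp_rw [fourierCoeff, Finset.smul_sum]
      rw [integral_finsetSum _ (fun a _ => integrable_finsetSum _
        fun b _ => (hint _).fourier_smul (n := -r))]
      refine Finset.sum_congr rfl fun a _ => ?_
      rw [integral_finsetSum _ (fun b _ => (hint _).fourier_smul (n := -r))]
      refine Finset.sum_congr rfl fun b _ => ?_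
      have h3 := congrFun (fourierCoeff_fourier (T := 1) ((a : ℤ) - b)) r
      rw [Pi.single_apply] at h3
      simp only [eq_comm (a := (a : ℤ) - b)]
      exact h3
    rw [← h2]
    exact h1
  have hpos : ∀ r : ℕ, r < L → fourierCoeff F (r : ℤ) = 1 - (r : ℂ) / L := by
    intro r hr
    rw [hcoeff, Finset.sum_comm]
    have : ∀ b ∈ Finset.range L, (∑ a ∈ Finset.range L,
        if (a : ℤ) - b = (r : ℤ) then (1 : ℂ) else 0) = if b < L - r then 1 else 0 := by
      intro b _
      rw [Finset.sum_congr rfl (g := fun a => if a = b + r then (1 : ℂ) else 0)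
        (fun a _ => by congr 1; simp only [eq_iff_iff]; omega)]
      rw [Finset.sum_ite_eq']
      simp only [Finset.mem_range]
      congr 1
      simp only [eq_iff_iff]; omega
    rw [Finset.sum_congr rfl this, ← Finset.sum_filter, Finset.sum_const]
    have hf : (Finset.range L).filter (fun b => b < L - r) = Finset.range (L - r) := by
      ext b; simp; omega
    rw [hf, Finset.card_range, nsmul_eq_mul, Nat.cast_sub hr.le]
    field_simp
  have hnorm : ∀ x, ‖F x‖ = (F x).re := by
    intro x
    have : F x = (((1 / (L : ℝ)) * Complex.normSq (∑ a ∈ Finset.range L, fourier (a : ℤ) x) : ℝ) : ℂ) := by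
      push_cast
      rw [Complex.normSq_eq_conj_mul_self, map_sum, Finset.sum_mul_sum, Finset.sum_comm]
      simp only [F]
      congr 1
      refine Finset.sum_congr rfl fun a _ => Finset.sum_congr rfl fun b _ => ?_
      rw [← fourier_neg, ← fourier_add]
      congr 1
      ring_nf
    rw [this, Complex.norm_real, Complex.ofReal_re, Real.norm_of_nonneg]
    have := Complex.normSq_nonneg (∑ a ∈ Finset.range L, fourier (a : ℤ) x)
    positivity
  refine ⟨L, by exact_mod_cast hRL, F, hFc, ?_, ?_, ?_⟩
  · simp_rw [hnorm]
    have h0 := hpos 0 (by exact_mod_cast hL0)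
    have : fourierCoeff F ((0:ℕ):ℤ) = ∫ x, F x ∂haarAddCircle := by
      simp [fourierCoeff]
    rw [this] at h0
    have h3 := integral_re (𝕜 := ℂ) (integrable_of_cont hFc)
    simp only [RCLike.re_eq_complex_re] at h3
    rw [h3, h0]
    simp
  · intro r hr
    rw [hcoeff]
    rw [Finset.sum_eq_zero, mul_zero]
    intro a ha
    refine Finset.sum_eq_zero fun b hb => ?_
    rw [if_neg]
    simp only [Finset.mem_range] at ha hb
    rintro rfl
    rw [le_abs] at hr
    omega
  · intro r hr
    have hrL : (r : ℝ) < L := lt_of_le_of_lt (by exact_mod_cast hr) hRL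
    rw [hpos r (by exact_mod_cast hrL)]
    have : (1 - (r : ℂ) / L - 1) = ((-(r / L) : ℝ) : ℂ) := by push_cast; ring
    rw [this, Complex.norm_real, norm_neg, Real.norm_of_nonneg (by positivity)]
    rw [div_le_iff₀ hL0]
    rw [div_lt_iff₀ hη] at hRη
    have : (r : ℝ) ≤ R := by exact_mod_cast hr
    linarith

/-! ### Points realizing all sign patterns -/

/-- A substitute for Kronecker's theorem. Arbitrarily close to any `y₀` there are points `y` such
that every sign pattern `ε` is approximated by the characters `e(-m y i)` for a suitable `m`, and
these `m` are bounded. For a fixed pattern the admissible `y` form a dense open set of `ℝ ^ N`, so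
the claim follows from Baire's theorem. Multiplying by `e(-r y i) ≈ e(-r y₀ i)` gives the form
stated, in which `m` is followed by `2 N` controlled frequencies. -/
lemma exists_signed_points (N : ℕ) {η : ℝ} (hη : 0 < η) (y₀ : Fin N → ℝ) :
    ∃ y : Fin N → ℝ, ∃ R : ℕ, ∀ ε : Fin N → Bool, ∃ m : ℕ, m ≤ R ∧ ∀ i, ∀ r : ℕ, r < 2 * N →
      ‖fourier (-((m : ℤ) + r)) (y i : AddCircle (1:ℝ)) -
        (if ε i then 1 else -1) * fourier (-(r : ℤ)) (y₀ i : AddCircle (1:ℝ))‖ ≤ η := by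
  have hcont : ∀ (n : ℤ) (i : Fin N), Continuous
      (fun y : Fin N → ℝ => (fourier n (y i : AddCircle (1:ℝ)) : ℂ)) := fun n i =>
    (fourier n).continuous.comp ((AddCircle.continuous_mk' 1).comp (continuous_apply i))
  let U : (Fin N → Bool) → Set (Fin N → ℝ) := fun ε =>
    ⋃ m : ℕ, ⋂ i, {y | ‖fourier (-(m : ℤ)) (y i : AddCircle (1:ℝ)) -
      (if ε i then 1 else -1)‖ < η / 2}
  have hUo : ∀ ε, IsOpen (U ε) := fun ε => isOpen_iUnion fun m => isOpen_iInter_of_finite fun i =>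
    isOpen_lt ((hcont _ i).sub continuous_const).norm continuous_const
  have hUd : ∀ ε, Dense (U ε) := by
    intro ε
    rw [Metric.dense_iff]
    intro t ρ hρ
    obtain ⟨m, hm⟩ := exists_nat_gt (1 / ρ)
    have hm0 : (0 : ℝ) < m := lt_trans (by positivity) hm
    -- `m y i` is an integer where the sign is `1` and a half-integer where it is `-1`
    let β : Fin N → ℝ := fun i => if ε i then 0 else 1 / 2
    refine ⟨fun i => (⌊(m : ℝ) * t i⌋ + β i) / m, ?_, ?_⟩
    · rw [Metric.mem_ball, dist_pi_lt_iff hρ]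
      intro i
      have h1 := Int.floor_le ((m : ℝ) * t i)
      have h2 := Int.lt_floor_add_one ((m : ℝ) * t i)
      have hβ0 : 0 ≤ β i := by simp only [β]; split_ifs <;> norm_num
      have hβ1 : β i ≤ 1 / 2 := by simp only [β]; split_ifs <;> norm_num
      have : (⌊(m : ℝ) * t i⌋ + β i) / m - t i = (⌊(m : ℝ) * t i⌋ + β i - m * t i) / m := by
        field_simp
      rw [Real.dist_eq, this, abs_div, abs_of_pos hm0, div_lt_iff₀ hm0]
      rw [div_lt_iff₀ hρ] at hm
      rw [abs_lt]
      constructor <;> nlinarith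
    · simp only [U, Set.mem_iUnion, Set.mem_iInter, Set.mem_ofPred_eq]
      refine ⟨m, fun i => ?_⟩
      have : (fourier (-(m : ℤ)) (((⌊(m : ℝ) * t i⌋ + β i) / m : ℝ) : AddCircle (1:ℝ)) : ℂ)
          = if ε i then 1 else -1 := by
        have hmc : (m : ℂ) ≠ 0 := by exact_mod_cast hm0.ne'
        rw [fourier_coe_apply]
        have h3 : 2 * (Real.pi : ℂ) * Complex.I * ((-(m : ℤ) : ℤ) : ℂ) *
            (((⌊(m : ℝ) * t i⌋ + β i) / m : ℝ) : ℂ) / ((1 : ℝ) : ℂ) =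
            -(2 * Real.pi * Complex.I * β i) +
              ((-⌊(m : ℝ) * t i⌋ : ℤ) : ℂ) * (2 * Real.pi * Complex.I) := by
          push_cast
          field_simp
          ring
        rw [h3, Complex.exp_add, Complex.exp_int_mul_two_pi_mul_I, mul_one]
        by_cases h : ε i
        · simp [β, h]
        · simp only [β, h]
          simp only [Bool.false_eq_true, if_false]
          rw [Complex.exp_neg, show (2 * (Real.pi : ℂ) * Complex.I * ((1 / 2 : ℝ) : ℂ)) =
            Real.pi * Complex.I by push_cast; ring, Complex.exp_pi_mul_I]
          norm_num
      rw [this, sub_self, norm_zero]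
      positivity
  let V : Set (Fin N → ℝ) := ⋂ i, ⋂ r : Fin (2 * N),
    {y | ‖fourier (-((r : ℕ) : ℤ)) (y i : AddCircle (1:ℝ)) -
      fourier (-((r : ℕ) : ℤ)) (y₀ i : AddCircle (1:ℝ))‖ < η / 2}
  have hVo : IsOpen V := isOpen_iInter_of_finite fun i => isOpen_iInter_of_finite fun r =>
    isOpen_lt ((hcont _ i).sub continuous_const).norm continuous_const
  have hVne : V.Nonempty := ⟨y₀, by simp [V, hη]⟩
  obtain ⟨y, hyV, hyU⟩ := (dense_iInter_of_isOpen hUo hUd).inter_open_nonempty V hVo hVne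
  simp only [U, V, Set.mem_iUnion, Set.mem_iInter, Set.mem_ofPred_eq] at hyV hyU
  choose m hm using hyU
  refine ⟨y, ∑ ε, m ε, fun ε => ⟨m ε, Finset.single_le_sum (f := m) (fun _ _ => Nat.zero_le _)
    (Finset.mem_univ ε), fun i r hr => ?_⟩⟩
  have h1 := hm ε i
  have h2 := hyV i ⟨r, hr⟩
  simp only at h2
  rw [neg_add, fourier_add]
  set a : ℂ := fourier (-(m ε : ℤ)) (y i : AddCircle (1:ℝ))
  set b : ℂ := fourier (-(r : ℤ)) (y i : AddCircle (1:ℝ)) with hb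
  set b' : ℂ := fourier (-(r : ℤ)) (y₀ i : AddCircle (1:ℝ))
  set s : ℂ := if ε i then 1 else -1 with hs
  have hbn : ‖b‖ = 1 := by rw [hb, fourier_apply]; exact Circle.norm_coe _
  have hsn : ‖s‖ = 1 := by rw [hs]; split_ifs <;> simp
  calc ‖a * b - s * b'‖ = ‖(a - s) * b + s * (b - b')‖ := by ring_nf
    _ ≤ ‖(a - s) * b‖ + ‖s * (b - b')‖ := norm_add_le _ _
    _ = ‖a - s‖ + ‖b - b'‖ := by rw [norm_mul, norm_mul, hbn, hsn, one_mul, mul_one]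
    _ ≤ η := by linarith

/-! ### Elementary estimates -/

lemma norm_fourier_eq_one (n : ℤ) (x : AddCircle (1:ℝ)) : ‖(fourier n x : ℂ)‖ = 1 := by
  rw [fourier_apply]; exact Circle.norm_coe _

lemma sum_range_shift_of_periodic {N : ℕ} (h : ℕ → ℝ) (hp : ∀ i, h (i + N) = h i) (l : ℕ) :
    ∑ i ∈ Finset.range N, h (i + l) = ∑ i ∈ Finset.range N, h i := by
  induction l with
  | zero => simp
  | succ l ih =>
    rw [← ih]
    have h1 := Finset.sum_range_succ (fun i => h (i + l)) N
    have h2 := Finset.sum_range_succ' (fun i => h (i + l)) N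
    have h3 : h (N + l) = h (0 + l) := by rw [zero_add, add_comm, hp]
    have h4 : ∀ i, h (i + 1 + l) = h (i + (l + 1)) := fun i => by congr 1; ring
    simp only [h4] at h2
    linarith

/-- The nodes `x + i / N` lie, modulo `1`, at distances at most `1 / N, 2 / N, …, 1` from `0`, and
`|1 - e(t)| ≤ 2π |t|`; the sum is therefore at least a harmonic sum. -/
lemma log_le_sum_inv_norm {N : ℕ} (hN : 1 ≤ N) (x : ℝ)
    (hx : ∀ i : ℕ, fourier 1 ((x + i / N : ℝ) : AddCircle (1:ℝ)) ≠ (1 : ℂ)) :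
    N / (2 * Real.pi) * Real.log N ≤
      ∑ i ∈ Finset.range N, ‖(1 - fourier 1 ((x + i / N : ℝ) : AddCircle (1:ℝ)) : ℂ)⁻¹‖ := by
  have hN0 : (0 : ℝ) < N := by exact_mod_cast hN
  have hper : ∀ (t : ℝ) (k : ℤ), ((t + k : ℝ) : AddCircle (1:ℝ)) = (t : AddCircle (1:ℝ)) := by
    intro t k
    have : ((k : ℝ) : AddCircle (1:ℝ)) = 0 := (AddCircle.coe_eq_zero_iff 1).2 ⟨k, by simp⟩
    rw [AddCircle.coe_add, this, add_zero]
  set h : ℕ → ℝ := fun i => ‖(1 - fourier 1 ((x + i / N : ℝ) : AddCircle (1:ℝ)) : ℂ)⁻¹‖ with hh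
  have hp : ∀ i, h (i + N) = h i := by
    intro i
    have : (x + ((i + N : ℕ) : ℝ) / N : ℝ) = (x + i / N) + ((1 : ℤ) : ℝ) := by
      push_cast; field_simp; ring
    simp only [hh]
    rw [this, hper]
  -- the shift `l` moves the node closest to `x` from the right to index `0`
  set k : ℤ := ⌈x⌉
  set l : ℕ := ⌈(N : ℝ) * (k - x)⌉₊
  have hk : x ≤ k := Int.le_ceil x
  have hl1 : (N : ℝ) * (k - x) ≤ l := Nat.le_ceil _
  have hl2 : (l : ℝ) < N * (k - x) + 1 :=
    Nat.ceil_lt_add_one (mul_nonneg hN0.le (by linarith))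
  rw [← sum_range_shift_of_periodic h hp l]
  have hlog : Real.log N ≤ ∑ i ∈ Finset.range N, ((i : ℝ) + 1)⁻¹ := by
    have h1 := log_add_one_le_harmonic N
    have h2 : ((harmonic N : ℚ) : ℝ) = ∑ i ∈ Finset.range N, ((i : ℝ) + 1)⁻¹ := by
      simp [harmonic]
    rw [h2] at h1
    refine le_trans (Real.log_le_log hN0 ?_) h1
    push_cast; linarith
  refine (mul_le_mul_of_nonneg_left hlog (by positivity)).trans ?_
  rw [Finset.mul_sum]
  refine Finset.sum_le_sum fun i _ => ?_
  have hs : (x + ((i + l : ℕ) : ℝ) / N : ℝ) = (x - k + (i + l) / N) + (k : ℝ) := by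
    push_cast; ring
  have hne := hx (i + l)
  simp only [hh]
  rw [hs, hper] at hne ⊢
  set s : ℝ := x - k + (i + l) / N with hsdef
  have hNs : N * s = N * (x - k) + i + l := by rw [hsdef]; field_simp; ring
  have hs0 : 0 ≤ s := by
    have : 0 ≤ N * s := by rw [hNs]; nlinarith [(Nat.cast_nonneg i : (0:ℝ) ≤ i)]
    exact nonneg_of_mul_nonneg_right this hN0
  have hs1 : s * N ≤ i + 1 := by rw [mul_comm, hNs]; nlinarith
  have hle : ‖(1 - fourier 1 (s : AddCircle (1:ℝ)) : ℂ)‖ ≤ 2 * Real.pi * s := by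
    rw [norm_sub_rev, fourier_coe_apply]
    have := Real.norm_exp_I_mul_ofReal_sub_one_le (x := 2 * Real.pi * s)
    rw [Real.norm_of_nonneg (by positivity)] at this
    rwa [show 2 * (Real.pi : ℂ) * Complex.I * ((1 : ℤ) : ℂ) * (s : ℂ) / ((1 : ℝ) : ℂ) =
      Complex.I * ((2 * Real.pi * s : ℝ) : ℂ) by push_cast; ring]
  have hpos : 0 < ‖(1 - fourier 1 (s : AddCircle (1:ℝ)) : ℂ)‖ :=
    norm_pos_iff.2 (sub_ne_zero.2 (Ne.symm hne))
  rw [norm_inv]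
  have hsum : (0:ℝ) < i + 1 := by positivity
  rw [← div_eq_mul_inv, div_div, ← one_div, div_le_div_iff₀ (by positivity) hpos, one_mul]
  calc _ ≤ (N : ℝ) * (2 * Real.pi * s) := by gcongr
    _ = 2 * Real.pi * (s * N) := by ring
    _ ≤ 2 * Real.pi * (i + 1) := by gcongr

/-- `1 / (1 - u)` has real part `1/2` for `|u| = 1`, so its imaginary part has almost full size. -/
lemma norm_inv_le_abs_im {u : ℂ} (hu : ‖u‖ = 1) (hu1 : u ≠ 1) :
    ‖(1 - u)⁻¹‖ ≤ |((1 - u)⁻¹).im| + 1 / 2 := by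
  have hre : ((1 - u)⁻¹).re = 1 / 2 := by
    have h1 : Complex.normSq (1 - u) ≠ 0 := by
      rw [Ne, Complex.normSq_eq_zero, sub_eq_zero]; exact Ne.symm hu1
    have h2 : Complex.normSq u = 1 := by rw [Complex.normSq_eq_norm_sq, hu]; norm_num
    rw [Complex.inv_re]
    rw [div_eq_iff h1]
    rw [Complex.normSq_apply] at h2 ⊢
    simp only [Complex.sub_re, Complex.sub_im, Complex.one_re, Complex.one_im]
    nlinarith
  have := Complex.norm_le_abs_re_add_abs_im ((1 - u)⁻¹)
  rw [hre, abs_of_pos (by norm_num)] at this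
  linarith

/-- Rotating a complex number by a unimodular `w` that is not real exposes it to the real part. -/
lemma abs_im_mul_norm_le {w W : ℂ} (hw : ‖w‖ = 1) :
    |w.im| * ‖W‖ ≤ 2 * |W.re| + |(w * W).re| := by
  have h1 : |w.im| ≤ 1 := (Complex.abs_im_le_norm w).trans hw.le
  have h2 : |w.re| ≤ 1 := (Complex.abs_re_le_norm w).trans hw.le
  have h3 : w.im * W.im = w.re * W.re - (w * W).re := by rw [Complex.mul_re]; ring
  have h4 : |w.im| * |W.im| ≤ |W.re| + |(w * W).re| := by
    rw [← abs_mul, h3]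
    refine (abs_sub _ _).trans ?_
    rw [abs_mul]
    nlinarith [abs_nonneg W.re]
  have h5 := Complex.norm_le_abs_re_add_abs_im W
  nlinarith [abs_nonneg W.re, abs_nonneg w.im]

/-! ### A single block -/

lemma fourier_add_arg (n : ℤ) (x y : AddCircle (1:ℝ)) :
    (fourier n (x + y) : ℂ) = fourier n x * fourier n y := by
  simp only [fourier_apply, smul_add, AddCircle.toCircle_add, Circle.coe_mul]

lemma fourier_natCast_eq_pow (r : ℕ) (x : AddCircle (1:ℝ)) :
    (fourier (r : ℤ) x : ℂ) = (fourier 1 x) ^ r := by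
  induction r with
  | zero => simp
  | succ r ih => rw [Nat.cast_succ, fourier_add, ih, pow_succ]

lemma fourierCoeff_translate (F : AddCircle (1:ℝ) → ℂ) (y : AddCircle (1:ℝ)) (r : ℤ) :
    fourierCoeff (fun x => F (x - y)) r = fourier (-r) y * fourierCoeff F r := by
  have h := integral_sub_right_eq_self (μ := (haarAddCircle : Measure (AddCircle (1:ℝ))))
    (fun t => fourier (-r) (t + y) • F t) y
  simp only [sub_add_cancel] at h
  rw [fourierCoeff, h, fourierCoeff, ← integral_const_mul]
  congr 1
  ext t
  rw [fourier_add_arg, smul_eq_mul, smul_eq_mul]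
  ring

/-- Kolmogorov's building block. `P` is the average of Fejér kernels centred at perturbations
`y i` of the nodes `-i / N`. Up to a bounded error, the sum of its Fourier series over the `N`
frequencies starting at `m` is `e(m x) (1 - e(N x)) · (1 / N) ∑ i, σ i / (1 - e(x + i / N))`, with
signs `σ i` prescribed by the choice of `m`. Signs that make all imaginary parts positive yield
size `log N`. The factor `z` and the real part account for the later modulation and for `f` being
real-valued: passing from the window at `m` to the one at `m + N` multiplies the sum by `e(N x)`,
so at least one of the two has a large real part unless `e(N x)` is nearly real. -/
lemma exists_block {N : ℕ} (hN : 1 ≤ N) :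
    ∃ L : ℕ, ∃ P : AddCircle (1:ℝ) → ℂ, Continuous P ∧
      (∫ x, ‖P x‖ ∂haarAddCircle) ≤ 1 ∧
      (∀ r : ℤ, (L : ℤ) ≤ |r| → fourierCoeff P r = 0) ∧
      ∀ (x : AddCircle (1:ℝ)) (z : ℂ), ‖z‖ = 1 → ∃ n : ℕ, n + N ≤ L ∧
        (fourier (N : ℤ) x : ℂ).im ^ 2 * Real.log N / (6 * Real.pi) - 2 ≤
          |(z * ∑ r ∈ Finset.range N,
            fourierCoeff P ((n : ℤ) + r) * fourier ((n : ℤ) + r) x).re| := by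
  have hN0 : (0 : ℝ) < N := by exact_mod_cast hN
  have hNc : (N : ℂ) ≠ 0 := by exact_mod_cast hN0.ne'
  set η : ℝ := 1 / (2 * N) with hηdef
  have hη : 0 < η := by positivity
  let y₀ : Fin N → ℝ := fun i => -((i : ℕ) / N)
  obtain ⟨y, R, hy⟩ := exists_signed_points N hη y₀
  obtain ⟨L, hRL, F, hFc, hF1, hF0, hFη⟩ := exists_fejer (R + 2 * N) hη
  let Y : Fin N → AddCircle (1:ℝ) := fun i => (y i : AddCircle (1:ℝ))
  let P : AddCircle (1:ℝ) → ℂ := fun x => (1 / (N : ℂ)) * ∑ i, F (x - Y i)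
  have hFtc : ∀ i, Continuous fun x => F (x - Y i) := fun i =>
    hFc.comp (continuous_id.sub continuous_const)
  have hPc : Continuous P := continuous_const.mul (continuous_finsetSum _ fun i _ => hFtc i)
  have hcoeff : ∀ r : ℤ, fourierCoeff P r =
      fourierCoeff F r * ((1 / (N : ℂ)) * ∑ i, fourier (-r) (Y i)) := by
    intro r
    have h1 := fourierCoeff.const_mul (fun x => ∑ i, F (x - Y i)) (1 / (N : ℂ)) r
    have h2 := congrFun (fourierCoeff.sum Finset.univ (fun i x => F (x - Y i))
      (fun i _ => integrable_of_cont (hFtc i))) r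
    have h3 : (∑ i, fun x => F (x - Y i)) = fun x => ∑ i, F (x - Y i) := by
      ext x; simp
    rw [h3] at h2
    rw [h2, Finset.sum_apply] at h1
    simp_rw [fourierCoeff_translate] at h1
    rw [← Finset.sum_mul] at h1
    refine h1.trans ?_
    ring
  refine ⟨L, P, hPc, ?_, fun r hr => by rw [hcoeff, hF0 r hr, zero_mul], ?_⟩
  · calc ∫ x, ‖P x‖ ∂haarAddCircle
        ≤ ∫ x, (1 / (N : ℝ)) * ∑ i, ‖F (x - Y i)‖ ∂haarAddCircle := by
          refine integral_mono (integrable_of_cont hPc).norm ?_ fun x => ?_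
          · exact (integrable_finsetSum _ fun i _ =>
              (integrable_of_cont (hFtc i)).norm).const_mul _
          · simp only [P, norm_mul, norm_div, norm_one, Complex.norm_natCast]
            gcongr
            exact norm_sum_le _ _
      _ = (1 / (N : ℝ)) * ∑ i : Fin N, ∫ x, ‖F x‖ ∂haarAddCircle := by
          rw [integral_const_mul, integral_finsetSum _ fun i _ =>
              (integrable_of_cont (hFtc i)).norm]
          congr 1
          exact Finset.sum_congr rfl fun i _ =>
            integral_sub_right_eq_self (fun x => ‖F x‖) (Y i)
      _ ≤ (1 / (N : ℝ)) * ∑ i : Fin N, 1 := by gcongr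
      _ = 1 := by simp; field_simp
  intro x z hz
  induction x using QuotientAddGroup.induction_on with
  | H x =>
  set w : ℂ := fourier (N : ℤ) (x : AddCircle (1:ℝ)) with hw
  have hwn : ‖w‖ = 1 := norm_fourier_eq_one _ _
  by_cases hw0 : w.im = 0
  · refine ⟨0, by omega, ?_⟩
    rw [hw0]
    refine le_trans ?_ (abs_nonneg _)
    norm_num
  let u : ℕ → ℂ := fun i => fourier 1 ((x + i / N : ℝ) : AddCircle (1:ℝ))
  have hun : ∀ i, ‖u i‖ = 1 := fun i => norm_fourier_eq_one _ _
  have huN : ∀ i, u i ^ N = w := by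
    intro i
    simp only [u]
    rw [← fourier_natCast_eq_pow, AddCircle.coe_add, fourier_add_arg, ← hw]
    rw [fourier_coe_apply]
    have : 2 * (Real.pi : ℂ) * Complex.I * ((N : ℤ) : ℂ) * ((i / N : ℝ) : ℂ) / ((1 : ℝ) : ℂ) =
        ((i : ℤ) : ℂ) * (2 * Real.pi * Complex.I) := by
      push_cast; field_simp
    rw [this, Complex.exp_int_mul_two_pi_mul_I, mul_one]
  have hw1 : w ≠ 1 := by rintro h; rw [h] at hw0; simp at hw0
  have hu1 : ∀ i, u i ≠ 1 := by
    intro i h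
    apply hw1
    rw [← huN i, h, one_pow]
  let q : ℕ → ℂ := fun i => (1 - u i)⁻¹
  let ε : Fin N → Bool := fun i => decide (0 ≤ (q i).im)
  let σ : Fin N → ℂ := fun i => if ε i then 1 else -1
  obtain ⟨m, hmR, hm⟩ := hy ε
  let B : ℂ := (1 / (N : ℂ)) * ∑ i : Fin N, σ i * q i
  have hB : Real.log N / (2 * Real.pi) - 1 / 2 ≤ ‖B‖ := by
    have hre : ∀ i : Fin N, (σ i * q i).im = |(q i).im| := by
      intro i
      simp only [σ, ε]
      by_cases h : 0 ≤ (q i).im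
      · simp [h, abs_of_nonneg h]
      · simp [h, abs_of_neg (not_le.1 h)]
    have h1 : B.im = (1 / (N : ℝ)) * ∑ i : Fin N, |(q i).im| := by
      have : (1 / (N : ℂ)) = ((1 / (N : ℝ) : ℝ) : ℂ) := by push_cast; rfl
      simp only [B]
      rw [this, Complex.im_ofReal_mul, Complex.im_sum]
      simp_rw [hre]
    have h2 := log_le_sum_inv_norm hN x hu1
    have h3 : ∑ i ∈ Finset.range N, ‖q i‖ ≤ ∑ i ∈ Finset.range N, (|(q i).im| + 1 / 2) :=
      Finset.sum_le_sum fun i _ => norm_inv_le_abs_im (hun i) (hu1 i)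
    rw [Finset.sum_add_distrib, Finset.sum_const, Finset.card_range, nsmul_eq_mul] at h3
    have h4 := h2.trans h3
    rw [Finset.sum_range] at h4
    refine le_trans ?_ (Complex.abs_im_le_norm B)
    refine le_trans ?_ (le_abs_self _)
    rw [h1, one_div_mul_eq_div, le_div_iff₀ hN0]
    calc _ = N / (2 * Real.pi) * Real.log N - N * (1 / 2) := by ring
      _ ≤ _ := by linarith
  -- the Fourier coefficients of the signed measure with masses `σ i / N` at `y₀ i`
  let Q : ℕ → ℂ := fun s => (1 / (N : ℂ)) * ∑ i, σ i * fourier (-(s : ℤ)) (y₀ i : AddCircle (1:ℝ))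
  have hPQ : ∀ s < 2 * N, ‖fourierCoeff P ((m : ℤ) + s) - Q s‖ ≤ 1 / N := by
    intro s hs
    set a : ℂ := (1 / (N : ℂ)) * ∑ i, fourier (-((m : ℤ) + s)) (Y i) with ha
    have hN1 : ‖(1 / (N : ℂ))‖ = 1 / N := by simp
    have han : ‖a‖ ≤ 1 := by
      rw [ha, norm_mul, hN1]
      calc _ ≤ (1 / (N : ℝ)) * ∑ i : Fin N, (1 : ℝ) := by
            gcongr
            exact norm_sum_le_of_le _ fun i _ => (norm_fourier_eq_one _ _).le
        _ = 1 := by simp; field_simp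
    have haQ : ‖a - Q s‖ ≤ η := by
      simp only [ha, Q]
      rw [← mul_sub, ← Finset.sum_sub_distrib, norm_mul, hN1]
      calc _ ≤ (1 / (N : ℝ)) * ∑ i : Fin N, η := by
            gcongr
            exact norm_sum_le_of_le _ fun i _ => hm i s hs
        _ = η := by simp; field_simp
    have hFm := hFη (m + s) (by omega)
    push_cast at hFm
    rw [hcoeff]
    calc ‖fourierCoeff F ((m : ℤ) + s) * a - Q s‖
        = ‖(fourierCoeff F ((m : ℤ) + s) - 1) * a + (a - Q s)‖ := by ring_nf
      _ ≤ ‖fourierCoeff F ((m : ℤ) + s) - 1‖ * ‖a‖ + ‖a - Q s‖ :=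
          (norm_add_le _ _).trans (by rw [norm_mul])
      _ ≤ η * 1 + η := by gcongr
      _ = 1 / N := by rw [hηdef]; field_simp; norm_num
  have hQu : ∀ s : ℕ, Q s * fourier (s : ℤ) (x : AddCircle (1:ℝ)) =
      (1 / (N : ℂ)) * ∑ i : Fin N, σ i * u i ^ s := by
    intro s
    simp only [Q]
    rw [mul_assoc, Finset.sum_mul]
    congr 1
    refine Finset.sum_congr rfl fun i _ => ?_
    rw [mul_assoc]
    congr 1
    simp only [u, y₀]
    rw [← fourier_natCast_eq_pow, AddCircle.coe_add, fourier_add_arg, mul_comm]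
    congr 1
    rw [fourier_coe_apply, fourier_coe_apply]
    congr 1
    push_cast
    ring
  have hwin : ∀ s₀ : ℕ, ∑ r ∈ Finset.range N, Q (s₀ + r) *
      fourier ((s₀ + r : ℕ) : ℤ) (x : AddCircle (1:ℝ)) =
      (1 / (N : ℂ)) * ∑ i : Fin N, σ i * u i ^ s₀ * ((1 - w) * q i) := by
    intro s₀
    simp_rw [hQu]
    rw [← Finset.mul_sum, Finset.sum_comm]
    congr 1
    refine Finset.sum_congr rfl fun i _ => ?_
    simp_rw [pow_add, ← mul_assoc]
    rw [← Finset.mul_sum, mul_assoc (σ i * u i ^ s₀)]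
    congr 1
    rw [geom_sum_eq (hu1 i), huN]
    simp only [q]
    rw [← neg_sub w 1, ← neg_sub (u i) 1, inv_neg, neg_mul_neg, div_eq_mul_inv]
  -- the idealized window sum at `m`; the one at `m + N` is `w * W`
  let W : ℂ := z * (fourier (m : ℤ) (x : AddCircle (1:ℝ)) * ((1 - w) * B))
  have hWn : ‖W‖ = ‖1 - w‖ * ‖B‖ := by
    simp only [W]
    rw [norm_mul, norm_mul, norm_mul, hz, norm_fourier_eq_one, one_mul, one_mul]
  let A : ℕ → ℂ := fun n => z * ∑ r ∈ Finset.range N,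
    fourierCoeff P ((n : ℤ) + r) * fourier ((n : ℤ) + r) (x : AddCircle (1:ℝ))
  have hAerr : ∀ s₀ ≤ N, ‖A (m + s₀) - z * (fourier (m : ℤ) (x : AddCircle (1:ℝ)) *
      ((1 / (N : ℂ)) * ∑ i : Fin N, σ i * u i ^ s₀ * ((1 - w) * q i)))‖ ≤ 1 := by
    intro s₀ hs₀
    rw [← hwin]
    simp only [A]
    rw [← mul_sub, norm_mul, hz, one_mul, Finset.mul_sum, ← Finset.sum_sub_distrib]
    calc _ ≤ ∑ r ∈ Finset.range N, (1 / (N : ℝ)) := by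
          refine norm_sum_le_of_le _ fun r hr => ?_
          have hr' := Finset.mem_range.1 hr
          have h1 := hPQ (s₀ + r) (by omega)
          have h2 : (((m + s₀ : ℕ) : ℤ) + r) = (m : ℤ) + ((s₀ + r : ℕ) : ℤ) := by
            push_cast; ring
          rw [h2, fourier_add]
          calc _ = ‖(fourierCoeff P ((m : ℤ) + ((s₀ + r : ℕ) : ℤ)) - Q (s₀ + r)) *
                (fourier (m : ℤ) (x : AddCircle (1:ℝ)) *
                  fourier ((s₀ + r : ℕ) : ℤ) (x : AddCircle (1:ℝ)))‖ := by ring_nf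
            _ ≤ 1 / N := by
                rw [norm_mul, norm_mul, norm_fourier_eq_one, norm_fourier_eq_one, mul_one,
                  mul_one]
                exact h1
      _ = 1 := by simp; field_simp
  have hA0 : ‖A m - W‖ ≤ 1 := by
    have h := hAerr 0 (Nat.zero_le _)
    simp only [pow_zero, mul_one, add_zero] at h
    convert h using 5
    simp only [B]
    rw [mul_left_comm, Finset.mul_sum]
    congr 1
    exact Finset.sum_congr rfl fun i _ => by ring
  have hAN : ‖A (m + N) - w * W‖ ≤ 1 := by
    have h := hAerr N le_rfl
    convert h using 3
    simp only [W, B, huN]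
    simp only [Finset.mul_sum]
    exact Finset.sum_congr rfl fun i _ => by ring
  have hmain := abs_im_mul_norm_le (w := w) (W := W) hwn
  have hre : ∀ a b : ℂ, ‖a - b‖ ≤ 1 → |b.re| ≤ |a.re| + 1 := by
    intro a b hab
    have h1 := (Complex.abs_re_le_norm (a - b)).trans hab
    rw [Complex.sub_re] at h1
    have h2 := abs_sub_abs_le_abs_sub b.re a.re
    rw [abs_sub_comm] at h2
    linarith
  have h0 := hre _ _ hA0
  have h1 := hre _ _ hAN
  have him : |w.im| ≤ ‖1 - w‖ := by
    have := Complex.abs_im_le_norm (1 - w)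
    simpa using this
  have himle : |w.im| ≤ 1 := (Complex.abs_im_le_norm w).trans hwn.le
  have hlow : w.im ^ 2 * (Real.log N / (2 * Real.pi) - 1 / 2) ≤ |w.im| * ‖W‖ := by
    rw [hWn, ← sq_abs, sq, mul_assoc]
    refine mul_le_mul_of_nonneg_left ?_ (abs_nonneg _)
    exact (mul_le_mul_of_nonneg_left hB (abs_nonneg _)).trans
      (mul_le_mul_of_nonneg_right him (norm_nonneg _))
  have hsq : w.im ^ 2 ≤ 1 := by rw [← sq_abs]; nlinarith [abs_nonneg w.im]
  have hid : w.im ^ 2 * Real.log N / (6 * Real.pi) =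
      (w.im ^ 2 * (Real.log N / (2 * Real.pi))) / 3 := by
    field_simp; ring
  rw [hid]
  by_cases hcmp : |(A m).re| ≤ |(A (m + N)).re|
  · refine ⟨m + N, by omega, ?_⟩
    change _ ≤ |(A (m + N)).re|
    linarith
  · refine ⟨m, by omega, ?_⟩
    change _ ≤ |(A m).re|
    push Not at hcmp
    linarith

/-! ### Exceptional sets -/

/-- Since `x ↦ N x` preserves Haar measure, the set where `e(N x)` is nearly real has a measure
that does not depend on `N`. -/
lemma exists_small_im_set {δ : ℝ≥0∞} (hδ : 0 < δ) :
    ∃ τ : ℝ, 0 < τ ∧ ∀ N : ℕ, 1 ≤ N →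
      haarAddCircle {x : AddCircle (1:ℝ) | |(fourier (N : ℤ) x : ℂ).im| < τ} ≤ δ := by
  have hcont : ∀ n : ℤ, Continuous fun x : AddCircle (1:ℝ) => |(fourier n x : ℂ).im| := fun n =>
    (Complex.continuous_im.comp (fourier n).continuous).abs
  have hmp : ∀ n : ℤ, n ≠ 0 → MeasurePreserving (fun x : AddCircle (1:ℝ) => n • x)
      haarAddCircle haarAddCircle := fun n hn =>
    Measure.measurePreserving_zsmul _ hn
  let s : ℕ → Set (AddCircle (1:ℝ)) := fun k => {x | |(fourier 1 x : ℂ).im| < 1 / ((k : ℝ) + 1)}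
  have hs : ∀ k, MeasurableSet (s k) := fun k =>
    (isOpen_lt (hcont 1) continuous_const).measurableSet
  have hanti : Antitone s := fun a b hab x hx => by
    simp only [s, Set.mem_ofPred_eq] at hx ⊢
    exact hx.trans_le (Nat.one_div_le_one_div hab)
  have hnull : haarAddCircle (⋂ k, s k) = 0 := by
    have hsub : (⋂ k, s k) ⊆ (fun x : AddCircle (1:ℝ) => (2 : ℤ) • x) ⁻¹' {0} := by
      intro x hx
      have him : (fourier 1 x : ℂ).im = 0 := by
        rw [← abs_nonpos_iff]
        refine le_of_forall_pos_lt_add fun ρ hρ => ?_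
        obtain ⟨k, hk⟩ := exists_nat_one_div_lt hρ
        rw [zero_add]
        exact (Set.mem_iInter.1 hx k).trans hk
      have hn := norm_fourier_eq_one 1 x
      have h2 : (fourier 2 x : ℂ) = 1 := by
        have : (fourier 2 x : ℂ) = fourier 1 x * fourier 1 x := by
          rw [← fourier_add]; norm_num
        have hns : Complex.normSq (fourier 1 x : ℂ) = 1 := by
          rw [Complex.normSq_eq_norm_sq, hn]; norm_num
        rw [Complex.normSq_apply, him] at hns
        rw [this]
        apply Complex.ext
        · rw [Complex.mul_re, him]; simpa using hns
        · rw [Complex.mul_im, him]; simp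
      rw [fourier_apply] at h2
      have h3 : AddCircle.toCircle ((2 : ℤ) • x) = 1 := Circle.ext (by simpa using h2)
      rw [← AddCircle.toCircle_zero (T := 1)] at h3
      exact AddCircle.injective_toCircle one_ne_zero h3
    refine measure_mono_null hsub ?_
    rw [(hmp 2 two_ne_zero).measure_preimage (measurableSet_singleton _).nullMeasurableSet]
    have hv : (volume : Measure (AddCircle (1:ℝ))) {0} = 0 := by
      rw [← Metric.closedBall_zero, AddCircle.volume_closedBall]; simp
    rw [volume_eq_smul_haarAddCircle] at hv
    simpa using hv
  have hlim := tendsto_measure_iInter_atTop (μ := (haarAddCircle : Measure (AddCircle (1:ℝ))))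
    (fun k => (hs k).nullMeasurableSet) hanti ⟨0, measure_ne_top _ _⟩
  rw [hnull] at hlim
  obtain ⟨k, hk⟩ := (hlim.eventually_lt_const hδ).exists
  refine ⟨1 / ((k : ℝ) + 1), by positivity, fun N hN => ?_⟩
  have hpre : {x : AddCircle (1:ℝ) | |(fourier (N : ℤ) x : ℂ).im| < 1 / ((k : ℝ) + 1)} =
      (fun x : AddCircle (1:ℝ) => (N : ℤ) • x) ⁻¹' s k := by
    ext x
    simp only [s, Set.mem_ofPred_eq, Set.mem_preimage, fourier_apply, one_smul]
  rw [hpre, (hmp N (by omega)).measure_preimage (hs k).nullMeasurableSet]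
  exact hk.le

/-! ### Gluing the blocks -/

lemma integrable_tsum_and_hasSum_coeff {G : ℕ → AddCircle (1:ℝ) → ℂ} (hG : ∀ j, Continuous (G j))
    (hsum : Summable fun j => ∫ x, ‖G j x‖ ∂haarAddCircle) :
    Integrable (fun x => ∑' j, G j x) haarAddCircle ∧
      ∀ k : ℤ, HasSum (fun j => fourierCoeff (G j) k) (fourierCoeff (fun x => ∑' j, G j x) k) := by
  constructor
  · refine ⟨(Measurable.tsum fun j => (hG j).measurable).aestronglyMeasurable, ?_⟩
    rw [hasFiniteIntegral_iff_enorm]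
    refine lt_of_le_of_lt (lintegral_mono fun x => enorm_tsum_le_tsum_enorm) ?_
    rw [lintegral_tsum fun j => (hG j).measurable.enorm.aemeasurable]
    have h : ∀ j, ∫⁻ x, ‖G j x‖ₑ ∂haarAddCircle =
        ENNReal.ofReal (∫ x, ‖G j x‖ ∂haarAddCircle) := fun j => by
      rw [ofReal_integral_norm_eq_lintegral_enorm (integrable_of_cont (hG j))]
    simp_rw [h]
    rw [← ENNReal.ofReal_tsum_of_nonneg (fun j => integral_nonneg fun x => norm_nonneg _) hsum]
    exact ENNReal.ofReal_lt_top
  · intro k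
    have h := hasSum_integral_of_summable_integral_norm
      (F := fun j x => fourier (-k) x • G j x)
      (fun j => (integrable_of_cont (hG j)).fourier_smul (-k)) (by
        simp_rw [norm_smul, norm_fourier_eq_one, one_mul]
        exact hsum)
    simp_rw [tsum_const_smul''] at h
    exact h

lemma fourierCoeff_re {g : AddCircle (1:ℝ) → ℂ} (hg : Integrable g haarAddCircle) (k : ℤ) :
    fourierCoeff (fun x => ((g x).re : ℂ)) k =
      (fourierCoeff g k + (starRingEnd ℂ) (fourierCoeff g (-k))) / 2 := by
  have hconj : (starRingEnd ℂ) (fourierCoeff g (-k)) =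
      ∫ x, fourier (-k) x • (starRingEnd ℂ) (g x) ∂haarAddCircle := by
    rw [fourierCoeff, ← integral_conj]
    congr 1
    ext x
    rw [smul_eq_mul, map_mul, ← fourier_neg, smul_eq_mul, neg_neg]
  have hgc : Integrable (fun x => (starRingEnd ℂ) (g x)) haarAddCircle := by
    refine (integrable_norm_iff ?_).1 ?_
    · exact Complex.continuous_conj.comp_aestronglyMeasurable hg.1
    · simpa using hg.norm
  rw [hconj, fourierCoeff, fourierCoeff, ← integral_add (hg.fourier_smul _) (hgc.fourier_smul _),
    ← integral_div]
  congr 1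
  ext x
  rw [smul_eq_mul, smul_eq_mul, smul_eq_mul, Complex.re_eq_add_conj]
  ring

/-- For real `f` the terms of index `k` and `-k` are conjugate, so the difference of two partial
sums is twice the real part of a one-sided window sum. -/
lemma fourierPartialSum_sub {f : AddCircle (1:ℝ) → ℝ} (n N : ℕ) (x : AddCircle (1:ℝ)) :
    fourierPartialSum (fun t => (f t : ℂ)) (n + N) x -
      fourierPartialSum (fun t => (f t : ℂ)) n x =
    ((2 * (∑ r ∈ Finset.range N, fourierCoeff (fun t => (f t : ℂ)) ((n : ℤ) + 1 + r) *
      fourier ((n : ℤ) + 1 + r) x).re : ℝ) : ℂ) := by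
  induction N with
  | zero => simp
  | succ N ih =>
    set k : ℤ := (n : ℤ) + 1 + N with hk
    have hset : Finset.Icc (-((n + (N + 1) : ℕ) : ℤ)) ((n + (N + 1) : ℕ) : ℤ) =
        insert k (insert (-k) (Finset.Icc (-((n + N : ℕ) : ℤ)) ((n + N : ℕ) : ℤ))) := by
      ext j
      simp only [Finset.mem_Icc, Finset.mem_insert]
      push_cast
      omega
    have hconj : fourierCoeff (fun t => (f t : ℂ)) (-k) =
        (starRingEnd ℂ) (fourierCoeff (fun t => (f t : ℂ)) k) := by
      rw [fourierCoeff, fourierCoeff, ← integral_conj]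
      congr 1
      ext t
      rw [smul_eq_mul, smul_eq_mul, map_mul, ← fourier_neg, Complex.conj_ofReal]
    have hstep : fourierPartialSum (fun t => (f t : ℂ)) (n + (N + 1)) x =
        fourierPartialSum (fun t => (f t : ℂ)) (n + N) x +
        ((2 * (fourierCoeff (fun t => (f t : ℂ)) k * fourier k x).re : ℝ) : ℂ) := by
      rw [fourierPartialSum, hset, Finset.sum_insert, Finset.sum_insert, hconj, fourier_neg,
        ← map_mul, Complex.ofReal_mul, Complex.re_eq_add_conj, fourierPartialSum]
      · push_cast; ring
      · simp only [Finset.mem_Icc, not_and, not_le]; push_cast; omega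
      · simp only [Finset.mem_Icc, Finset.mem_insert, not_or, not_and, not_le]; push_cast; omega
    rw [hstep, add_sub_right_comm, ih, Finset.sum_range_succ, Complex.add_re]
    push_cast
    ring

lemma fourierCoeff_modulate (P : AddCircle (1:ℝ) → ℂ) (c : ℂ) (M k : ℤ) :
    fourierCoeff (fun x => c * (fourier M x * P x)) k = c * fourierCoeff P (k - M) := by
  rw [fourierCoeff.const_mul]
  congr 1
  rw [fourierCoeff, fourierCoeff]
  congr 1
  ext x
  rw [smul_eq_mul, smul_eq_mul, ← mul_assoc, ← fourier_add]
  congr 3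
  ring

/-- Blocks modulated into consecutive, pairwise disjoint bands of positive frequencies, with weights
`2⁻ʲ`, add up to an integrable function `g`; take `f = Re g`. Only the `j`-th block contributes to
the increments of the partial sums of `f` inside the `j`-th band. -/
lemma exists_glued (L : ℕ → ℕ) (P : ℕ → AddCircle (1:ℝ) → ℂ) (hPc : ∀ j, Continuous (P j))
    (hP1 : ∀ j, (∫ x, ‖P j x‖ ∂haarAddCircle) ≤ 1)
    (hP0 : ∀ j (r : ℤ), (L j : ℤ) ≤ |r| → fourierCoeff (P j) r = 0) :
    ∃ f : AddCircle (1:ℝ) → ℝ, Integrable f haarAddCircle ∧ ∃ M : ℕ → ℕ, ∀ j (n N : ℕ),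
      n + N ≤ L j → ∀ x,
      fourierPartialSum (fun t => (f t : ℂ)) (M j + n + N) x -
        fourierPartialSum (fun t => (f t : ℂ)) (M j + n) x =
      (((1 / 2 : ℝ) ^ j * (fourier ((M j : ℤ) + 1) x * ∑ r ∈ Finset.range N,
        fourierCoeff (P j) ((n : ℤ) + r) * fourier ((n : ℤ) + r) x).re : ℝ) : ℂ) := by
  -- the `j`-th band consists of the frequencies `S j < k ≤ S (j + 1)`, centred at `M j + 1`
  let S : ℕ → ℕ := fun j => ∑ i ∈ Finset.range j, (2 * L i + 1)
  have hSmono : Monotone S := monotone_nat_of_le_succ fun j => by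
    simp only [S, Finset.sum_range_succ]; omega
  have hSsucc : ∀ j, S (j + 1) = S j + (2 * L j + 1) := fun j => Finset.sum_range_succ _ _
  let M : ℕ → ℕ := fun j => S j + L j
  let G : ℕ → AddCircle (1:ℝ) → ℂ := fun j x =>
    (((1 / 2 : ℝ) ^ j : ℝ) : ℂ) * (fourier ((M j : ℤ) + 1) x * P j x)
  have hGc : ∀ j, Continuous (G j) := fun j =>
    continuous_const.mul ((fourier _).continuous.mul (hPc j))
  have hGcoeff : ∀ j (k : ℤ), fourierCoeff (G j) k =
      (((1 / 2 : ℝ) ^ j : ℝ) : ℂ) * fourierCoeff (P j) (k - (M j + 1)) := fun j k =>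
    fourierCoeff_modulate _ _ _ _
  have hGsum : Summable fun j => ∫ x, ‖G j x‖ ∂haarAddCircle := by
    refine Summable.of_nonneg_of_le (fun j => integral_nonneg fun x => norm_nonneg _) (fun j => ?_)
      (summable_geometric_of_lt_one (r := (1 / 2 : ℝ)) (by norm_num) (by norm_num))
    have hn : ∀ x, ‖G j x‖ = (1 / 2 : ℝ) ^ j * ‖P j x‖ := fun x => by
      simp only [G]
      rw [norm_mul, norm_mul, norm_fourier_eq_one, one_mul, Complex.norm_real,
        Real.norm_of_nonneg (by positivity)]
    simp_rw [hn]
    rw [integral_const_mul]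
    exact mul_le_of_le_one_right (by positivity) (hP1 j)
  obtain ⟨hgint, hgcoeff⟩ := integrable_tsum_and_hasSum_coeff hGc hGsum
  set g : AddCircle (1:ℝ) → ℂ := fun x => ∑' j, G j x with hg
  have hgneg : ∀ k : ℤ, k ≤ 0 → fourierCoeff g k = 0 := by
    intro k hk
    refine (hgcoeff k).unique ?_
    have : (fun j => fourierCoeff (G j) k) = fun _ => 0 := by
      ext j
      rw [hGcoeff, hP0 j, mul_zero]
      rw [le_abs]
      simp only [M]; push_cast; omega
    rw [this]
    exact hasSum_zero
  have hgband : ∀ j (k : ℤ), (S j : ℤ) < k → k ≤ S (j + 1) → fourierCoeff g k =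
      (((1 / 2 : ℝ) ^ j : ℝ) : ℂ) * fourierCoeff (P j) (k - (M j + 1)) := by
    intro j k hk1 hk2
    refine (hgcoeff k).unique ?_
    rw [← hGcoeff]
    refine hasSum_single j fun i hij => ?_
    rw [hGcoeff, hP0 i, mul_zero]
    rw [le_abs]
    have hi := hSsucc i
    simp only [M]
    push_cast
    rcases lt_or_gt_of_ne hij with h | h
    · have := hSmono (Nat.succ_le_of_lt h)
      simp only [Nat.succ_eq_add_one] at this
      left; omega
    · have := hSmono (Nat.succ_le_of_lt h)
      simp only [Nat.succ_eq_add_one] at this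
      right; omega
  refine ⟨fun x => (g x).re, hgint.re, M, fun j n N hnN x => ?_⟩
  rw [fourierPartialSum_sub, Finset.mul_sum]
  have hterm : ∀ r ∈ Finset.range N,
      fourierCoeff (fun t => ((g t).re : ℂ)) (((M j + n : ℕ) : ℤ) + 1 + r) *
        fourier (((M j + n : ℕ) : ℤ) + 1 + r) x =
      (((1 / 2 : ℝ) ^ j / 2 : ℝ) : ℂ) * (fourier ((M j : ℤ) + 1) x *
        (fourierCoeff (P j) ((n : ℤ) + r) * fourier ((n : ℤ) + r) x)) := by
    intro r hr
    have hr' := Finset.mem_range.1 hr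
    have hS := hSsucc j
    have hkk : (((M j + n : ℕ) : ℤ) + 1 + r) = ((M j : ℤ) + 1) + ((n : ℤ) + r) := by
      push_cast; ring
    rw [hkk, fourierCoeff_re hgint, hgneg (-_) (by omega), map_zero, add_zero,
      hgband j _ (by simp only [M]; push_cast; omega) (by simp only [M]; push_cast; omega),
      add_sub_cancel_left, fourier_add (m := (M j : ℤ) + 1)]
    push_cast
    ring
  rw [Finset.sum_congr rfl hterm, ← Finset.mul_sum, Complex.re_ofReal_mul, ← mul_assoc]
  congr 2
  ring

/-! ### Choice of the widths and conclusion -/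

/-- There is a width `N` for which the size of a block, damped by `2⁻ʲ`, beats `j |φ N| log N`. -/
lemma exists_width {φ : ℕ → ℝ} (hφ : Tendsto φ atTop (nhds 0)) {τ : ℝ} (hτ : 0 < τ) (j : ℕ) :
    ∃ N : ℕ, 2 ≤ N ∧ j * (|φ N| * Real.log N) <
      (1 / 2 : ℝ) ^ j * (τ ^ 2 * Real.log N / (6 * Real.pi) - 2) := by
  set κ : ℝ := (1 / 2 : ℝ) ^ j * (τ ^ 2 / (6 * Real.pi)) with hκ
  have hκ0 : 0 < κ := by have := Real.pi_pos; positivity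
  have h1 : Tendsto (fun N => (j : ℝ) * |φ N|) atTop (nhds 0) := by
    simpa using (hφ.abs.const_mul (j : ℝ))
  have h2 : Tendsto (fun N : ℕ => Real.log N) atTop atTop :=
    Real.tendsto_log_atTop.comp tendsto_natCast_atTop_atTop
  obtain ⟨N, hN1, hN2, hN3⟩ := ((h1.eventually_lt_const (half_pos hκ0)).and
    ((h2.eventually_gt_atTop (4 / κ)).and (eventually_ge_atTop 2))).exists
  refine ⟨N, hN3, ?_⟩
  have hlog : 0 < Real.log N := lt_trans (by positivity) hN2
  rw [div_lt_iff₀ hκ0] at hN2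
  have hp : (1 / 2 : ℝ) ^ j ≤ 1 := pow_le_one₀ (by norm_num) (by norm_num)
  calc j * (|φ N| * Real.log N) = (j * |φ N|) * Real.log N := by ring
    _ ≤ κ / 2 * Real.log N := by gcongr
    _ < κ * Real.log N - 2 * 1 := by linarith
    _ ≤ κ * Real.log N - 2 * (1 / 2 : ℝ) ^ j := by gcongr
    _ = _ := by rw [hκ]; ring

theorem kolmogorov_stein_divergence
    (φ : ℕ → ℝ) (hφ : Tendsto φ atTop (nhds 0)) :
    ∃ f : AddCircle (1:ℝ) → ℝ, Integrable f haarAddCircle ∧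
      ∀ᵐ x ∂(haarAddCircle : Measure (AddCircle (1:ℝ))),
        ¬ ∃ C : ℝ, ∀ m n : ℕ, 2 ≤ ((n:ℤ) - (m:ℤ)).natAbs →
          ‖fourierPartialSum (fun t => (f t : ℂ)) n x -
              fourierPartialSum (fun t => (f t : ℂ)) m x‖
            ≤ C * φ (((n:ℤ) - (m:ℤ)).natAbs) * Real.log (((n:ℤ) - (m:ℤ)).natAbs) := by
  -- `τ j` cuts off an exceptional set of measure at most `2⁻ʲ`; `N j` is the width of block `j`
  have hδ : ∀ j : ℕ, (0 : ℝ≥0∞) < ((2 : ℝ≥0∞)⁻¹) ^ j := fun j =>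
    ENNReal.pow_pos (ENNReal.inv_pos.2 ENNReal.ofNat_ne_top) j
  choose τ hτ0 hτ using fun j => exists_small_im_set (hδ j)
  choose N hN2 hN using fun j => exists_width hφ (hτ0 j) j
  choose L P hPc hP1 hP0 hP using fun j => exists_block (N := N j) (by have := hN2 j; omega)
  obtain ⟨f, hf, M, hM⟩ := exists_glued L P hPc hP1 hP0
  refine ⟨f, hf, ?_⟩
  have hBC := ae_eventually_notMem (μ := (haarAddCircle : Measure (AddCircle (1:ℝ))))
    (s := fun j => {x | |(fourier (N j : ℤ) x : ℂ).im| < τ j}) (by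
      refine ne_top_of_le_ne_top ?_
        (ENNReal.tsum_le_tsum fun j => hτ j (N j) (by have := hN2 j; omega))
      rw [ENNReal.tsum_geometric]
      simp)
  filter_upwards [hBC] with x hx
  rintro ⟨C, hC⟩
  obtain ⟨J, hJ⟩ := exists_nat_ge |C|
  obtain ⟨j, hxj, hjJ⟩ := (hx.and (eventually_ge_atTop J)).exists
  simp only [not_lt] at hxj
  obtain ⟨n, hnL, hn⟩ := hP j x (fourier ((M j : ℤ) + 1) x) (norm_fourier_eq_one _ _)
  have hdiff : (((M j + n + N j : ℕ) : ℤ) - ((M j + n : ℕ) : ℤ)).natAbs = N j := by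
    push_cast; omega
  have h := hC (M j + n) (M j + n + N j) (by rw [hdiff]; exact hN2 j)
  rw [hdiff, hM j n (N j) hnL x, Complex.norm_real, Real.norm_eq_abs, abs_mul,
    abs_of_pos (by positivity : (0 : ℝ) < (1 / 2) ^ j)] at h
  have hlog : 0 ≤ Real.log (N j) := Real.log_natCast_nonneg _
  have hsq : τ j ^ 2 ≤ (fourier (N j : ℤ) x : ℂ).im ^ 2 := by
    rw [← sq_abs (Complex.im _)]
    exact pow_le_pow_left₀ (hτ0 j).le hxj 2
  have hpi := Real.pi_pos
  have hlow : τ j ^ 2 * Real.log (N j) / (6 * Real.pi) - 2 ≤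
      (fourier (N j : ℤ) x : ℂ).im ^ 2 * Real.log (N j) / (6 * Real.pi) - 2 := by gcongr
  have hbig := (hN j).trans_le ((mul_le_mul_of_nonneg_left (hlow.trans hn)
    (by positivity : (0 : ℝ) ≤ (1 / 2) ^ j)).trans h)
  have hCj : |C| ≤ j := hJ.trans (by exact_mod_cast hjJ)
  have hup : C * φ (N j) * Real.log (N j) ≤ j * (|φ (N j)| * Real.log (N j)) := by
    rw [← mul_assoc]
    refine mul_le_mul_of_nonneg_right ?_ hlog
    calc C * φ (N j) ≤ |C * φ (N j)| := le_abs_self _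
      _ = |C| * |φ (N j)| := abs_mul _ _
      _ ≤ j * |φ (N j)| := by gcongr
  linarith
end

section
/- There exists an absolute constant C > 0 such that for every integer k ≥ 2 there is a finite Borel measure ν on 𝕋 with total variation ∫_𝕋 |dν| = 1 such that for almost every x ∈ 𝕋, sup{|S_n ν(x) − S_m ν(x)| : n, m ≥ 0, |n − m| = k} ≥ C log k. -/
/-!
For `k ≥ 2` let `ν = N⁻¹ ∑ δ_{x i}` with `N = 4k` nearly equally spaced points
`x i = (i + αⁱ⁺¹) / N`, where `α ∈ (0, 1)` is transcendental. Since
`D_{m+k}(t) - D_m(t) = 2 sin(πkt) cos(π(2m+k+1)t) / sin(πt)`, the difference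
`S_{m+k} ν(r) - S_m ν(r)` is the average over `i` of `amp k t_i * cos(2πm t_i + phase k t_i)`, where
`t_i = r - x i` and `amp k t = 2 |sin(πkt)| / |sin(πt)|` (`dirichlet_sub`).

* Outside a countable set of `r`, the `t_i` are independent over `ℤ` modulo `1`
  (`Transcendental.sum_pow_ne`, `exists_countable_indep`). Testing against the Riesz product
  `∏ (1 + cos(2πm t_i + φ_i))`, which is nonnegative, has mean `1` over `m`, and has
  mean `1/2` against each cosine, gives `sup_m ∑ a_i cos(2πm t_i + φ_i) ≥ ½ ∑ a_i`
  (`half_sum_le_of_sum_cos_le`).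
* For every `r` and every `l < k`, some `t_i` is congruent modulo `1` to a point `s` with
  `l + 1/4 ≤ k s ≤ l + 3/4`, where `amp k t_i ≥ k / (π (l + 1))`; summing over `l`
  gives `N⁻¹ ∑ amp k t_i ≥ (4π)⁻¹ log k` (`log_le_sum_amp`).
-/


open MeasureTheory Filter AddCircle
open scoped ENNReal

/-- The `j`-th Fourier–Stieltjes coefficient `ν̂(j) = ∫ e^{-2πijt} ν(dt)` of a finite
(signed) Borel measure `ν` on the circle, computed via the Jordan decomposition. -/
noncomputable def fourierStieltjesCoeff (ν : SignedMeasure (AddCircle (1:ℝ))) (j : ℤ) : ℂ :=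
  (∫ t, (fourier (-j) t : ℂ) ∂ν.toJordanDecomposition.posPart) -
    ∫ t, (fourier (-j) t : ℂ) ∂ν.toJordanDecomposition.negPart

/-- The `n`-th symmetric partial sum of the Fourier–Stieltjes series of `ν`:
`S_n ν (x) = ∑_{|j| ≤ n} ν̂(j) e^{2πijx}`. -/
noncomputable def fourierStieltjesPartialSum (ν : SignedMeasure (AddCircle (1:ℝ))) (n : ℕ)
    (x : AddCircle (1:ℝ)) : ℂ :=
  ∑ j ∈ Finset.Icc (-(n:ℤ)) (n:ℤ), fourierStieltjesCoeff ν j * fourier j x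

/-! ### Cesàro means -/

/-- `g` has Cesàro mean `c`. -/
def HasMean (g : ℕ → ℂ) (c : ℂ) : Prop :=
  Tendsto (fun M : ℕ => (∑ m ∈ Finset.range M, g m) / (M : ℂ)) atTop (nhds c)

lemma HasMean.add {f g : ℕ → ℂ} {a b : ℂ} (hf : HasMean f a) (hg : HasMean g b) :
    HasMean (fun m => f m + g m) (a + b) := by
  have := Filter.Tendsto.add hf hg
  refine this.congr fun M => ?_
  rw [Finset.sum_add_distrib, add_div]

lemma HasMean.const_mul {f : ℕ → ℂ} {a : ℂ} (c : ℂ) (hf : HasMean f a) :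
    HasMean (fun m => c * f m) (c * a) := by
  have := Filter.Tendsto.const_mul c hf
  refine this.congr fun M => ?_
  rw [← Finset.mul_sum, mul_div_assoc]

lemma HasMean.sum {ι : Type*} (s : Finset ι) {f : ι → ℕ → ℂ} {a : ι → ℂ}
    (hf : ∀ i ∈ s, HasMean (f i) (a i)) :
    HasMean (fun m => ∑ i ∈ s, f i m) (∑ i ∈ s, a i) := by
  have := tendsto_finsetSum s hf
  refine this.congr fun M => ?_
  rw [Finset.sum_comm, Finset.sum_div]

lemma HasMean.congr {f g : ℕ → ℂ} {a b : ℂ} (hf : HasMean f a) (h : ∀ m, g m = f m)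
    (hab : b = a) : HasMean g b := by
  rw [hab, show g = f from funext h]; exact hf

lemma hasMean_one : HasMean (fun _ => 1) 1 := by
  refine tendsto_const_nhds.congr' ?_
  filter_upwards [eventually_gt_atTop 0] with M hM
  have : (M : ℂ) ≠ 0 := by exact_mod_cast hM.ne'
  simp [this]

lemma hasMean_pow {u : ℂ} (hu : ‖u‖ = 1) (h1 : u ≠ 1) : HasMean (fun m => u ^ m) 0 := by
  have h : Tendsto (fun M : ℕ => (2 / ‖u - 1‖) / (M : ℝ)) atTop (nhds 0) :=
    tendsto_const_div_atTop_nhds_zero_nat _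
  refine squeeze_zero_norm (fun M => ?_) h
  rw [geom_sum_eq h1, norm_div, norm_div, Complex.norm_natCast]
  gcongr
  calc ‖u ^ M - 1‖ ≤ ‖u ^ M‖ + ‖(1 : ℂ)‖ := norm_sub_le _ _
    _ = 2 := by rw [norm_pow, hu]; norm_num

/-! ### Riesz products and Kronecker's theorem -/

/-- The cosine `m ↦ (w zᵐ + w⁻¹ z⁻ᵐ) / 2`, for unimodular `w` and `z`. -/
noncomputable def cosSeq (w z : ℂ) (m : ℕ) : ℂ := (w * z ^ m + w⁻¹ * z⁻¹ ^ m) / 2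

/-- The Riesz product `∏ (1 + cos)` over the indices in `s`. -/
noncomputable def rieszProd {ι : Type*} (w z : ι → ℂ) (s : Finset ι) (m : ℕ) : ℂ :=
  ∏ i ∈ s, (1 + cosSeq (w i) (z i) m)

section
variable {ι : Type*} [DecidableEq ι] {w z : ι → ℂ}

/-- The spectrum of the Riesz product consists of the products `∏ z_i ^ n_i`, so it is orthogonal
to any character `u` whose inverse is not of this form. -/
lemma hasMean_rieszProd_mul_pow (hz : ∀ i, ‖z i‖ = 1) (s : Finset ι) :
    ∀ u : ℂ, ‖u‖ = 1 → (∀ n : ι → ℤ, u * ∏ i ∈ s, z i ^ n i ≠ 1) →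
      HasMean (fun m => rieszProd w z s m * u ^ m) 0 := by
  induction s using Finset.induction_on with
  | empty =>
    intro u hu h
    refine (hasMean_pow hu (by simpa using h 0)).congr (fun m => by simp [rieszProd]) rfl
  | insert a s ha ih =>
    intro u hu h
    have key : ∀ d : ℤ, HasMean (fun m => rieszProd w z s m * (u * z a ^ d) ^ m) 0 := by
      intro d
      refine ih _ (by rw [norm_mul, norm_zpow, hz, hu]; simp) fun n => ?_
      have := h (Function.update n a d)
      rw [Finset.prod_insert ha, Function.update_self, Finset.prod_congr rfl
        (fun i hi => by rw [Function.update_of_ne (ne_of_mem_of_not_mem hi ha)])] at this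
      rwa [mul_assoc]
    refine (((key 0).add ((key 1).const_mul (w a / 2))).add
      ((key (-1)).const_mul ((w a)⁻¹ / 2))).congr (fun m => ?_) (by simp)
    simp only [rieszProd, Finset.prod_insert ha, cosSeq, zpow_zero, zpow_one, zpow_neg, mul_pow,
      mul_one]
    ring

lemma hasMean_rieszProd (hz : ∀ i, ‖z i‖ = 1) (s : Finset ι)
    (h : ∀ n : ι → ℤ, (∃ i ∈ s, n i ≠ 0) → ∏ i ∈ s, z i ^ n i ≠ 1) :
    HasMean (rieszProd w z s) 1 := by
  induction s using Finset.induction_on with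
  | empty => exact hasMean_one.congr (fun m => by simp [rieszProd]) rfl
  | insert a s ha ih =>
    have key : ∀ d : ℤ, d ≠ 0 → HasMean (fun m => rieszProd w z s m * (z a ^ d) ^ m) 0 := by
      intro d hd
      refine hasMean_rieszProd_mul_pow hz s _ (by rw [norm_zpow, hz]; simp) fun n => ?_
      have := h (Function.update n a d) ⟨a, by simp, by simpa using hd⟩
      rwa [Finset.prod_insert ha, Function.update_self, Finset.prod_congr rfl
        (fun i hi => by rw [Function.update_of_ne (ne_of_mem_of_not_mem hi ha)])] at this
    have h0 : HasMean (rieszProd w z s) 1 := by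
      refine ih fun n hn => ?_
      obtain ⟨i, hi, hni⟩ := hn
      have := h (Function.update n a 0) ⟨i, by simp [hi], by
        rwa [Function.update_of_ne (ne_of_mem_of_not_mem hi ha)]⟩
      rwa [Finset.prod_insert ha, Function.update_self, zpow_zero, one_mul, Finset.prod_congr rfl
        (fun i hi => by rw [Function.update_of_ne (ne_of_mem_of_not_mem hi ha)])] at this
    refine ((h0.add ((key 1 one_ne_zero).const_mul (w a / 2))).add
      ((key (-1) (by decide)).const_mul ((w a)⁻¹ / 2))).congr (fun m => ?_) (by simp)
    simp only [rieszProd, Finset.prod_insert ha, cosSeq, zpow_one, zpow_neg]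
    ring

/-- The Riesz product correlates with each of its own cosines. -/
lemma hasMean_rieszProd_mul_cosSeq (hz : ∀ i, ‖z i‖ = 1) (hw : ∀ i, w i ≠ 0) (s : Finset ι)
    (h : ∀ n : ι → ℤ, (∃ i ∈ s, n i ≠ 0) → ∏ i ∈ s, z i ^ n i ≠ 1) {a : ι} (has : a ∈ s) :
    HasMean (fun m => rieszProd w z s m * cosSeq (w a) (z a) m) (1 / 2) := by
  obtain ⟨s, ha, rfl⟩ : ∃ s', a ∉ s' ∧ insert a s' = s :=
    ⟨s.erase a, by simp, Finset.insert_erase has⟩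
  have key : ∀ d : ℤ, d ≠ 0 → HasMean (fun m => rieszProd w z s m * (z a ^ d) ^ m) 0 := by
    intro d hd
    refine hasMean_rieszProd_mul_pow hz s _ (by rw [norm_zpow, hz]; simp) fun n => ?_
    have := h (Function.update n a d) ⟨a, by simp, by simpa using hd⟩
    rwa [Finset.prod_insert ha, Function.update_self, Finset.prod_congr rfl
      (fun i hi => by rw [Function.update_of_ne (ne_of_mem_of_not_mem hi ha)])] at this
  have h0 : HasMean (rieszProd w z s) 1 := by
    refine hasMean_rieszProd hz s fun n hn => ?_
    obtain ⟨i, hi, hni⟩ := hn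
    have := h (Function.update n a 0) ⟨i, by simp [hi], by
      rwa [Function.update_of_ne (ne_of_mem_of_not_mem hi ha)]⟩
    rwa [Finset.prod_insert ha, Function.update_self, zpow_zero, one_mul, Finset.prod_congr rfl
      (fun i hi => by rw [Function.update_of_ne (ne_of_mem_of_not_mem hi ha)])] at this
  -- `(1 + cos) cos = cos + 1 / 2 + cos (2 ·) / 2`
  refine (((((h0.const_mul (1 / 2)).add ((key 1 one_ne_zero).const_mul (w a / 2))).add
    ((key (-1) (by decide)).const_mul ((w a)⁻¹ / 2))).add
    ((key 2 (by decide)).const_mul (w a ^ 2 / 4))).add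
    ((key (-2) (by decide)).const_mul ((w a)⁻¹ ^ 2 / 4))).congr (fun m => ?_) (by simp)
  have hza : z a ≠ 0 := by
    intro h0
    have := hz a
    simp [h0] at this
  have e2 : (z a ^ (2 : ℤ)) ^ m = (z a ^ m) ^ 2 := by
    rw [← zpow_natCast, ← zpow_natCast, ← zpow_natCast, ← zpow_mul, ← zpow_mul, mul_comm]; rfl
  have hw' := hw a
  have hzm : z a ^ m ≠ 0 := pow_ne_zero _ hza
  simp only [rieszProd, Finset.prod_insert ha, cosSeq, zpow_one, e2, zpow_neg, inv_pow]
  field_simp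
  ring

end

lemma cosSeq_exp (φ t : ℝ) (m : ℕ) :
    cosSeq (Complex.exp (φ * Complex.I)) (Complex.exp (2 * Real.pi * t * Complex.I)) m =
      (Real.cos (2 * Real.pi * m * t + φ) : ℝ) := by
  rw [cosSeq, Complex.ofReal_cos, Complex.cos, ← Complex.exp_neg, ← Complex.exp_neg,
    ← Complex.exp_nat_mul, ← Complex.exp_nat_mul, ← Complex.exp_add, ← Complex.exp_add]
  push_cast
  congr 3 <;> ring_nf

/-- A quantitative form of Kronecker's theorem: if the `t i` are linearly independent over `ℤ`
modulo `1`, no bound below `½ ∑ a_i` holds for `∑ a_i cos(2πm t_i + φ_i)` uniformly in `m`.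
The bound survives multiplication by the Riesz product and averaging over `m`. -/
lemma half_sum_le_of_sum_cos_le {ι : Type*} [Fintype ι] (t φ a : ι → ℝ)
    (H : ∀ n : ι → ℤ, n ≠ 0 → ∀ l : ℤ, ∑ i, (n i : ℝ) * t i ≠ l) (B : ℝ)
    (hB : ∀ m : ℕ, ∑ i, a i * Real.cos (2 * Real.pi * m * t i + φ i) ≤ B) :
    (∑ i, a i) / 2 ≤ B := by
  classical
  set w : ι → ℂ := fun i => Complex.exp (φ i * Complex.I) with hw
  set z : ι → ℂ := fun i => Complex.exp (2 * Real.pi * t i * Complex.I) with hz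
  have hzn : ∀ i, ‖z i‖ = 1 := fun i => by
    have := Complex.norm_exp_ofReal_mul_I (2 * Real.pi * t i)
    push_cast at this
    exact this
  have hind : ∀ n : ι → ℤ, (∃ i ∈ Finset.univ, n i ≠ 0) → ∏ i, z i ^ n i ≠ 1 := by
    rintro n ⟨i, -, hi⟩ h
    have h' : Complex.exp (∑ i, (n i : ℂ) * (2 * Real.pi * t i * Complex.I)) = 1 := by
      rw [Complex.exp_sum, ← h]
      exact Finset.prod_congr rfl fun i _ => Complex.exp_int_mul _ _
    obtain ⟨l, hl⟩ := Complex.exp_eq_one_iff.1 h'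
    refine H n (fun h0 => hi (by rw [h0]; rfl)) l ?_
    have h2 : ((∑ i, (n i : ℝ) * t i : ℝ) : ℂ) * (2 * Real.pi * Complex.I)
        = l * (2 * Real.pi * Complex.I) := by
      rw [← hl, Complex.ofReal_sum, Finset.sum_mul]
      refine Finset.sum_congr rfl fun i _ => ?_
      push_cast; ring
    have h3 := mul_right_cancel₀ Complex.two_pi_I_ne_zero h2
    exact_mod_cast h3
  set c : ι → ℕ → ℝ := fun i m => Real.cos (2 * Real.pi * m * t i + φ i)
  have hc : ∀ i m, cosSeq (w i) (z i) m = (c i m : ℝ) := fun i m => cosSeq_exp _ _ _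
  set P : ℕ → ℝ := fun m => ∏ i, (1 + c i m)
  have hP : ∀ m, rieszProd w z Finset.univ m = (P m : ℝ) := fun m => by
    simp only [rieszProd, hc, P]
    push_cast; rfl
  have hP0 : ∀ m, 0 ≤ P m := fun m => Finset.prod_nonneg fun i _ => by
    have := Real.neg_one_le_cos (2 * Real.pi * m * t i + φ i)
    simp only [c]; linarith
  have m1 := hasMean_rieszProd (w := w) hzn Finset.univ hind
  have m2 := HasMean.sum Finset.univ fun i _ => ((hasMean_rieszProd_mul_cosSeq (w := w) hzn
    (fun i => Complex.exp_ne_zero _) Finset.univ hind (Finset.mem_univ i)).const_mul (a i : ℂ))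
  have toReal : ∀ (g : ℕ → ℝ) (f : ℕ → ℂ) (x : ℝ) (y : ℂ), (∀ m, f m = g m) → y = x →
      HasMean f y → Tendsto (fun M : ℕ => (∑ m ∈ Finset.range M, g m) / (M : ℝ)) atTop
        (nhds x) := by
    intro g f x y hfg hxy hf
    rw [hxy] at hf
    have := (Complex.continuous_re.tendsto _).comp hf
    refine this.congr fun M => ?_
    simp only [Function.comp, hfg]
    rw [← Complex.ofReal_sum, ← Complex.ofReal_natCast, ← Complex.ofReal_div, Complex.ofReal_re]
  have r1 := (toReal P _ 1 1 hP (by simp) m1).const_mul B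
  have r2 := toReal (fun m => P m * ∑ i, a i * c i m) _ ((∑ i, a i) / 2) _ (fun m => by
      rw [hP]
      push_cast
      rw [Finset.mul_sum]
      refine Finset.sum_congr rfl fun i _ => ?_
      rw [hc]
      ring) (by rw [← Finset.sum_mul]; push_cast; ring) m2
  rw [mul_one] at r1
  refine le_of_tendsto_of_tendsto' r2 r1 fun M => ?_
  rw [← mul_div_assoc, Finset.mul_sum]
  refine div_le_div_of_nonneg_right (Finset.sum_le_sum fun m _ => ?_) (Nat.cast_nonneg _)
  rw [mul_comm B]
  exact mul_le_mul_of_nonneg_left (hB m) (hP0 m)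

/-! ### Dirichlet kernels -/

/-- The closed form of the Dirichlet kernel, `sin(πt) D_n(t) = sin((2n+1)πt)`. -/
lemma sin_mul_dirichlet (t : ℝ) (n : ℕ) :
    Complex.sin (Real.pi * t) * ∑ j ∈ Finset.Icc (-(n : ℤ)) (n : ℤ),
      Complex.exp (2 * Real.pi * Complex.I * j * t) = Complex.sin ((2 * n + 1) * (Real.pi * t)) := by
  induction n with
  | zero => simp
  | succ n ih =>
    have h : Finset.Icc (-((n + 1 : ℕ) : ℤ)) ((n + 1 : ℕ) : ℤ) =
        insert ((n : ℤ) + 1) (insert (-((n : ℤ) + 1)) (Finset.Icc (-(n : ℤ)) (n : ℤ))) := by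
      ext j
      simp only [Finset.mem_Icc, Finset.mem_insert]
      omega
    rw [h, Finset.sum_insert (by simp; omega), Finset.sum_insert (by simp), ← add_assoc, mul_add,
      ih]
    have h2 : Complex.exp (2 * Real.pi * Complex.I * ((n : ℤ) + 1 : ℤ) * t) +
        Complex.exp (2 * Real.pi * Complex.I * (-((n : ℤ) + 1) : ℤ) * t) =
        2 * Complex.cos ((2 * n + 2) * (Real.pi * t)) := by
      rw [Complex.two_cos]
      push_cast
      congr 2 <;> ring
    have e1 : (2 * ((n + 1 : ℕ) : ℂ) + 1) * (Real.pi * t) =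
      (2 * n + 2) * (Real.pi * t) + Real.pi * t := by push_cast; ring
    have e2 : (2 * (n : ℂ) + 1) * (Real.pi * t) =
      (2 * n + 2) * (Real.pi * t) - Real.pi * t := by ring
    rw [h2, e1, e2, Complex.sin_add, Complex.sin_sub]
    ring

/-- The amplitude of the difference `D_{m+k} - D_m` of Dirichlet kernels, which is the product of
this factor, independent of `m`, and a cosine. -/
noncomputable def amp (k : ℕ) (t : ℝ) : ℝ :=
  2 * |Real.sin (k * (Real.pi * t))| / |Real.sin (Real.pi * t)|

/-- The phase of the cosine factor of `D_{m+k} - D_m`; the shift by `π` absorbs the sign of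
`sin(πkt) / sin(πt)`. -/
noncomputable def phase (k : ℕ) (t : ℝ) : ℝ :=
  (k + 1) * (Real.pi * t) +
    if Real.sin (k * (Real.pi * t)) / Real.sin (Real.pi * t) < 0 then Real.pi else 0

lemma dirichlet_sub (k m : ℕ) (t : ℝ) (ht : Real.sin (Real.pi * t) ≠ 0) :
    (∑ j ∈ Finset.Icc (-((m + k : ℕ) : ℤ)) ((m + k : ℕ) : ℤ),
      Complex.exp (2 * Real.pi * Complex.I * j * t)) -
    ∑ j ∈ Finset.Icc (-(m : ℤ)) (m : ℤ), Complex.exp (2 * Real.pi * Complex.I * j * t) =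
      (amp k t * Real.cos (2 * Real.pi * m * t + phase k t) : ℝ) := by
  have ht' : Complex.sin (Real.pi * t) ≠ 0 := by
    rw [← Complex.ofReal_mul, ← Complex.ofReal_sin]; exact_mod_cast ht
  have hr : amp k t * Real.cos (2 * Real.pi * m * t + phase k t) =
      2 * Real.sin (k * (Real.pi * t)) * Real.cos ((2 * m + k + 1) * (Real.pi * t)) /
        Real.sin (Real.pi * t) := by
    have e : (2 * m + k + 1) * (Real.pi * t) = 2 * Real.pi * m * t + (k + 1) * (Real.pi * t) := by
      ring
    unfold amp phase
    rw [mul_div_assoc, ← abs_div]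
    split_ifs with h
    · rw [← add_assoc, Real.cos_add_pi, abs_of_neg h, e]; ring
    · rw [abs_of_nonneg (not_lt.1 h), e, add_zero]; ring
  apply mul_left_cancel₀ ht'
  rw [mul_sub, sin_mul_dirichlet, sin_mul_dirichlet, hr]
  push_cast
  rw [mul_div_cancel₀ _ ht', Complex.sin_sub_sin]
  ring_nf

/-! ### Averages of point masses -/

/-- The probability measure `(1/N) ∑ δ_{x i}` on the circle. -/
noncomputable def avgDirac {N : ℕ} (x : Fin N → ℝ) : Measure (AddCircle (1 : ℝ)) :=
  (N : ℝ≥0∞)⁻¹ • ∑ i, Measure.dirac (x i : AddCircle (1 : ℝ))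

lemma avgDirac_univ {N : ℕ} (hN : N ≠ 0) (x : Fin N → ℝ) : avgDirac x Set.univ = 1 := by
  simp [avgDirac]
  exact ENNReal.inv_mul_cancel (by simpa using hN) (by simp)

lemma integral_avgDirac {N : ℕ} (x : Fin N → ℝ) (f : C(AddCircle (1 : ℝ), ℂ)) :
    ∫ t, f t ∂(avgDirac x) = (N : ℂ)⁻¹ * ∑ i, f (x i) := by
  rw [avgDirac, integral_smul_measure, integral_finsetSum_measure]
  · simp [integral_dirac]
  · intro i _
    exact integrable_dirac (by simp)

lemma toJordan_toSignedMeasure (μ : Measure (AddCircle (1 : ℝ))) [IsFiniteMeasure μ] :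
    μ.toSignedMeasure.toJordanDecomposition.posPart = μ ∧
      μ.toSignedMeasure.toJordanDecomposition.negPart = 0 := by
  rw [SignedMeasure.toJordanDecomposition_eq
    (j := ⟨μ, 0, Measure.MutuallySingular.zero_right⟩)
    (by simp [JordanDecomposition.toSignedMeasure])]
  exact ⟨rfl, rfl⟩

lemma partialSum_avgDirac {N : ℕ} (x : Fin N → ℝ) [IsFiniteMeasure (avgDirac x)] (n : ℕ)
    (r : ℝ) :
    fourierStieltjesPartialSum (avgDirac x).toSignedMeasure n (r : AddCircle (1 : ℝ)) =
      (N : ℂ)⁻¹ * ∑ i, ∑ j ∈ Finset.Icc (-(n : ℤ)) (n : ℤ),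
        Complex.exp (2 * Real.pi * Complex.I * j * (r - x i : ℝ)) := by
  rw [Finset.sum_comm, Finset.mul_sum, fourierStieltjesPartialSum]
  refine Finset.sum_congr rfl fun j _ => ?_
  rw [fourierStieltjesCoeff, (toJordan_toSignedMeasure _).1, (toJordan_toSignedMeasure _).2,
    integral_zero_measure, sub_zero, integral_avgDirac, mul_assoc, Finset.sum_mul]
  congr 1
  refine Finset.sum_congr rfl fun i _ => ?_
  rw [fourier_coe_apply, fourier_coe_apply, ← Complex.exp_add]
  congr 1
  push_cast
  ring

/-! ### Lower bound for the amplitudes -/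

lemma half_le_sin {v : ℝ} (h1 : 1 / 4 ≤ v) (h2 : v ≤ 3 / 4) : 1 / 2 ≤ Real.sin (Real.pi * v) := by
  have hpi := Real.pi_pos
  have key : ∀ u : ℝ, 1 / 4 ≤ u → u ≤ 1 / 2 → 1 / 2 ≤ Real.sin (Real.pi * u) := by
    intro u hu hu'
    have := Real.mul_le_sin (x := Real.pi * u) (by positivity) (by nlinarith)
    have e : 2 / Real.pi * (Real.pi * u) = 2 * u := by field_simp
    linarith
  rcases le_total v (1 / 2) with h | h
  · exact key v h1 h
  · have := key (1 - v) (by linarith) (by linarith)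
    rwa [mul_sub, mul_one, Real.sin_pi_sub] at this

lemma abs_sin_add_int (x : ℝ) (d : ℤ) : |Real.sin (x + d * Real.pi)| = |Real.sin x| := by
  rw [Real.sin_add_int_mul_pi, abs_mul, abs_zpow, abs_neg, abs_one, one_zpow, one_mul]

lemma amp_nonneg (k : ℕ) (t : ℝ) : 0 ≤ amp k t := by unfold amp; positivity

/-- At a point `t ≡ s` modulo `1` with `l + 1/4 ≤ k s ≤ l + 3/4`, the numerator is at
least `1` and the denominator at most `π (l + 1) / k`. -/
lemma le_amp {k l : ℕ} (hl : l < k) {t s : ℝ} (d : ℤ) (hts : t = s + d)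
    (h1 : l + 1 / 4 ≤ k * s) (h2 : k * s ≤ l + 3 / 4) :
    k / (Real.pi * (l + 1)) ≤ amp k t := by
  have hk : (0 : ℝ) < k := by exact_mod_cast (Nat.zero_le l).trans_lt hl
  have hl' : (l : ℝ) + 1 ≤ k := by exact_mod_cast hl
  have hl0 : (0 : ℝ) ≤ l := Nat.cast_nonneg l
  have hpi := Real.pi_pos
  have hs0 : 0 < s := by
    by_contra h
    have := mul_nonpos_of_nonneg_of_nonpos hk.le (not_lt.1 h)
    linarith
  have hs1 : s < 1 := by
    by_contra h
    have := mul_le_mul_of_nonneg_left (not_lt.1 h) hk.le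
    linarith
  have hsin : 0 < Real.sin (Real.pi * s) :=
    Real.sin_pos_of_pos_of_lt_pi (by positivity) (by nlinarith)
  have hd : |Real.sin (Real.pi * t)| = Real.sin (Real.pi * s) := by
    rw [hts, mul_add, mul_comm Real.pi (d : ℝ), abs_sin_add_int, abs_of_pos hsin]
  have hn : 1 / 2 ≤ |Real.sin (k * (Real.pi * t))| := by
    have e : k * (Real.pi * t) = Real.pi * (k * s - l) + ((k * d + l : ℤ) : ℝ) * Real.pi := by
      rw [hts]; push_cast; ring
    rw [e, abs_sin_add_int]
    exact (half_le_sin (by linarith) (by linarith)).trans (le_abs_self _)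
  have hle : Real.sin (Real.pi * s) ≤ Real.pi * (l + 1) / k := by
    refine (Real.sin_le (by positivity)).trans ?_
    rw [le_div_iff₀ hk]
    nlinarith
  unfold amp
  rw [hd, le_div_iff₀ hsin]
  calc k / (Real.pi * (l + 1)) * Real.sin (Real.pi * s)
      ≤ k / (Real.pi * (l + 1)) * (Real.pi * (l + 1) / k) := by gcongr
    _ = 1 := by field_simp
    _ ≤ _ := by linarith

/-- For points `x i = (i + y i) / (4k)` with `0 < y i < 1` and any `r`, each window
`[l + 1/4, l + 3/4]`, `l < k`, contains `k (r - x i)` modulo `k`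
for some `i`, so the amplitudes sum to at least a multiple of the harmonic sum. -/
lemma log_le_sum_amp {k : ℕ} (hk : 0 < k) (y : Fin (4 * k) → ℝ) (hy0 : ∀ i, 0 < y i)
    (hy1 : ∀ i, y i < 1) (r : ℝ) :
    k / Real.pi * Real.log k ≤ ∑ i : Fin (4 * k), amp k (r - (i + y i) / (4 * k)) := by
  have hk' : (0 : ℝ) < k := by exact_mod_cast hk
  have hpi := Real.pi_pos
  set p : ℤ := ⌊4 * k * r⌋ with hp
  have hp1 : (p : ℝ) ≤ 4 * k * r := Int.floor_le _
  have hp2 : 4 * k * r < p + 1 := Int.lt_floor_add_one _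
  have hK : (0 : ℤ) < 4 * k := by exact_mod_cast (by omega : 0 < 4 * k)
  -- the index for the window `l` is the residue of `p - (4l + 2)` modulo `4k`
  have hex : ∀ l : ℕ, ∃ i : Fin (4 * k), (i : ℤ) = (p - (4 * l + 2)) % (4 * k) := by
    intro l
    have h0 := Int.emod_nonneg (p - (4 * l + 2)) hK.ne'
    have h1 := Int.emod_lt_of_pos (p - (4 * l + 2)) hK
    exact ⟨⟨((p - (4 * l + 2)) % (4 * k)).toNat, by omega⟩, by simp [h0]⟩
  choose g hg using hex
  have hinj : Set.InjOn g (Finset.range k : Set ℕ) := by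
    intro a ha b hb hab
    simp only [Finset.coe_range, Set.mem_Iio] at ha hb
    have h : (p - (4 * a + 2)) % (4 * k) = (p - (4 * b + 2)) % (4 * k) := by
      rw [← hg, ← hg, hab]
    have h2 : (4 * (k : ℤ)) ∣ 4 * ((b : ℤ) - a) := by
      have := Int.ModEq.dvd (n := 4 * (k : ℤ)) h.symm
      convert this using 1; ring
    have h3 : (k : ℤ) ∣ (b : ℤ) - a := (mul_dvd_mul_iff_left (by norm_num)).1 h2
    have h4 := Int.eq_zero_of_abs_lt_dvd h3 (by rw [abs_lt]; omega)
    omega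
  have hterm : ∀ l ∈ Finset.range k, (k : ℝ) / (Real.pi * (l + 1)) ≤
      amp k (r - (g l + y (g l)) / (4 * k)) := by
    intro l hl
    set d := (p - (4 * l + 2)) / (4 * (k : ℤ)) with hd
    have hdiv : (g l : ℤ) + 4 * k * d = p - (4 * l + 2) := by
      rw [hg, hd]; exact Int.emod_add_mul_ediv _ _
    have hdivR : ((g l : ℕ) : ℝ) + 4 * k * d = p - (4 * l + 2) := by exact_mod_cast hdiv
    have hks : k * (r - (g l + y (g l)) / (4 * k) - d) =
        (4 * k * r - p + 4 * l + 2 - y (g l)) / 4 := by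
      field_simp
      linarith
    have := hy0 (g l)
    have := hy1 (g l)
    refine le_amp (Finset.mem_range.1 hl) d (sub_add_cancel _ _).symm ?_ ?_ <;>
      rw [hks] <;> linarith
  calc k / Real.pi * Real.log k ≤ k / Real.pi * (harmonic k : ℝ) := by
        gcongr
        refine (Real.log_le_log hk' ?_).trans (log_add_one_le_harmonic k)
        push_cast; linarith
    _ = ∑ l ∈ Finset.range k, (k : ℝ) / (Real.pi * (l + 1)) := by
        rw [harmonic]
        push_cast
        rw [Finset.mul_sum]
        refine Finset.sum_congr rfl fun l _ => ?_
        have : (l : ℝ) + 1 ≠ 0 := by positivity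
        field_simp
    _ ≤ ∑ l ∈ Finset.range k, amp k (r - (g l + y (g l)) / (4 * k)) := Finset.sum_le_sum hterm
    _ = ∑ i ∈ (Finset.range k).image g, amp k (r - (i + y i) / (4 * k)) :=
        (Finset.sum_image (f := fun i : Fin (4 * k) => amp k (r - (i + y i) / (4 * k))) hinj).symm
    _ ≤ _ := Finset.sum_le_sum_of_subset_of_nonneg (Finset.subset_univ _)
        fun i _ _ => amp_nonneg _ _

/-! ### Independence of the points -/

lemma exists_transcendental : ∃ α : ℝ, 0 < α ∧ α < 1 ∧ Transcendental ℤ α := by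
  by_contra! h
  have hsub : Set.Ioo (0 : ℝ) 1 ⊆ {x : ℝ | IsAlgebraic ℤ x} := fun x hx => by
    have := h x hx.1 hx.2
    simpa [Transcendental] using this
  have hc := (Algebraic.countable ℤ ℝ).mono hsub
  have := hc.measure_zero volume
  simp at this

/-- Powers `α, α², …, αᴺ` of a transcendental `α`, together with `1`, are independent over `ℤ`. -/
lemma Transcendental.sum_pow_ne {α : ℝ} (hα : Transcendental ℤ α) {N : ℕ} (n : Fin N → ℤ)
    (hn : n ≠ 0) (l : ℤ) : ∑ i, (n i : ℝ) * α ^ ((i : ℕ) + 1) ≠ l := by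
  intro h
  obtain ⟨i₀, hi₀⟩ := Function.ne_iff.1 hn
  set q : Polynomial ℤ :=
    ∑ i, Polynomial.C (n i) * Polynomial.X ^ ((i : ℕ) + 1) - Polynomial.C l with hq
  have hq0 : Polynomial.aeval α q = 0 := by
    simp [hq, h]
  have hqz := (transcendental_iff.1 hα) q hq0
  have hco : q.coeff ((i₀ : ℕ) + 1) = n i₀ := by
    rw [hq, Polynomial.coeff_sub, Polynomial.coeff_C_succ, sub_zero]
    simp [Polynomial.finsetSum_coeff, Polynomial.coeff_X_pow, Fin.val_inj]
  rw [hqz] at hco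
  exact hi₀ (by simpa using hco.symm)

/-- If the points `x i` are independent over `ℤ` modulo `1`, so are the translates `r - x i` for
all but countably many `r`. -/
lemma exists_countable_indep {N : ℕ} (x : Fin N → ℝ)
    (hx : ∀ n : Fin N → ℤ, n ≠ 0 → ∀ l : ℤ, ∑ i, (n i : ℝ) * x i ≠ l) :
    ∃ S : Set ℝ, S.Countable ∧ ∀ r ∉ S, ∀ n : Fin N → ℤ, n ≠ 0 → ∀ l : ℤ,
      ∑ i, (n i : ℝ) * (r - x i) ≠ l := by
  refine ⟨Set.range fun q : (Fin N → ℤ) × ℤ =>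
    (q.2 + ∑ i, (q.1 i : ℝ) * x i) / ∑ i, (q.1 i : ℝ), Set.countable_range _, ?_⟩
  intro r hr n hn l h
  have h' : (∑ i, (n i : ℝ)) * r - ∑ i, (n i : ℝ) * x i = l := by
    rw [← h, Finset.sum_mul, ← Finset.sum_sub_distrib]
    exact Finset.sum_congr rfl fun i _ => by ring
  by_cases h0 : ∑ i, (n i : ℝ) = 0
  · refine hx n hn (-l) ?_
    rw [h0] at h'
    push_cast; linarith
  · refine hr ⟨(n, l), ?_⟩
    simp only
    rw [div_eq_iff h0]
    linarith

instance : NullSingletonClass (haarAddCircle : Measure (AddCircle (1 : ℝ))) := by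
  have h : (volume : Measure (AddCircle (1 : ℝ))) = haarAddCircle := by
    rw [volume_eq_smul_haarAddCircle]; simp
  rw [← h]
  refine ⟨fun x => le_antisymm (ENNReal.le_of_forall_pos_le_add fun ε hε _ => ?_) zero_le⟩
  calc volume {x} ≤ volume (Metric.closedBall x ((ε : ℝ) / 2)) :=
        measure_mono (Set.singleton_subset_iff.2 (Metric.mem_closedBall_self (by positivity)))
    _ ≤ ENNReal.ofReal (2 * ((ε : ℝ) / 2)) := by
        rw [AddCircle.volume_closedBall]
        exact ENNReal.ofReal_le_ofReal (min_le_right _ _)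
    _ = 0 + ε := by rw [mul_div_cancel₀ _ two_ne_zero, ENNReal.ofReal_coe_nnreal, zero_add]

/-- **Lemma 2.4 of the paper.**  There is an absolute constant `C > 0` such that for every
integer `k ≥ 2` there exists a finite Borel measure `ν` on `𝕋` of total variation `1` with
`sup { |S_n ν(x) - S_m ν(x)| : |n - m| = k } ≥ C log k` for almost every `x`. -/
theorem exists_measure_large_oscillation :
    ∃ C : ℝ, 0 < C ∧ ∀ k : ℕ, 2 ≤ k →
      ∃ ν : SignedMeasure (AddCircle (1:ℝ)),
        ν.totalVariation Set.univ = 1 ∧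
        ∀ᵐ x ∂(haarAddCircle : Measure (AddCircle (1:ℝ))),
          ENNReal.ofReal (C * Real.log k) ≤
            ⨆ (n : ℕ) (m : ℕ) (_ : ((n:ℤ) - (m:ℤ)).natAbs = k),
              ENNReal.ofReal ‖fourierStieltjesPartialSum ν n x -
                fourierStieltjesPartialSum ν m x‖ := by
  have hpi := Real.pi_pos
  refine ⟨1 / (16 * Real.pi), by positivity, fun k hk => ?_⟩
  have hk0 : 0 < k := by omega
  have hkR : (0 : ℝ) < k := by exact_mod_cast hk0
  have hlog : 0 < Real.log k := Real.log_pos (by exact_mod_cast hk)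
  obtain ⟨α, hα0, hα1, hα⟩ := exists_transcendental
  set y : Fin (4 * k) → ℝ := fun i => α ^ ((i : ℕ) + 1) with hy
  set x : Fin (4 * k) → ℝ := fun i => (i + y i) / (4 * k) with hx
  have hxind : ∀ n : Fin (4 * k) → ℤ, n ≠ 0 → ∀ l : ℤ, ∑ i, (n i : ℝ) * x i ≠ l := by
    intro n hn l h
    refine hα.sum_pow_ne n hn (4 * k * l - ∑ i, n i * (i : ℕ)) ?_
    have h4 : ∑ i, (n i : ℝ) * α ^ ((i : ℕ) + 1) + ∑ i, (n i : ℝ) * (i : ℕ) = 4 * k * l := by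
      rw [← h, ← Finset.sum_add_distrib, Finset.mul_sum]
      refine Finset.sum_congr rfl fun i _ => ?_
      simp only [hx, hy]
      field_simp
      ring
    push_cast
    linarith
  have huniv : avgDirac x Set.univ = 1 := avgDirac_univ (by omega) x
  have : IsFiniteMeasure (avgDirac x) := ⟨by rw [huniv]; simp⟩
  refine ⟨(avgDirac x).toSignedMeasure, ?_, ?_⟩
  · rw [SignedMeasure.totalVariation, (toJordan_toSignedMeasure _).1,
      (toJordan_toSignedMeasure _).2, add_zero, huniv]
  obtain ⟨S, hS, hSind⟩ := exists_countable_indep x hxind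
  have hnull := (hS.image (fun r : ℝ => (r : AddCircle (1 : ℝ)))).measure_zero haarAddCircle
  filter_upwards [compl_mem_ae_iff.2 hnull] with ξ hξ
  obtain ⟨r, rfl⟩ := QuotientAddGroup.mk_surjective ξ
  have hr := hSind r fun h => hξ ⟨r, h, rfl⟩
  have hsin : ∀ i, Real.sin (Real.pi * (r - x i)) ≠ 0 := by
    intro i h
    obtain ⟨l, hl⟩ := Real.sin_eq_zero_iff.1 h
    refine hr (Pi.single i 1) (by simp) l ?_
    rw [Finset.sum_eq_single i (fun j _ hj => by simp [Pi.single_eq_of_ne hj]) (by simp)]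
    simp only [Pi.single_eq_same, Int.cast_one, one_mul]
    exact (mul_left_cancel₀ hpi.ne' (by rw [← hl]; ring)).symm
  have hA : k / Real.pi * Real.log k ≤ ∑ i, amp k (r - x i) :=
    log_le_sum_amp hk0 y (fun i => pow_pos hα0 _)
      (fun i => pow_lt_one₀ hα0.le hα1 (by omega)) r
  obtain ⟨m, hm⟩ : ∃ m : ℕ, k / (4 * Real.pi) * Real.log k <
      ∑ i, amp k (r - x i) * Real.cos (2 * Real.pi * m * (r - x i) + phase k (r - x i)) := by
    by_contra! hcon
    have := half_sum_le_of_sum_cos_le (fun i => r - x i) (fun i => phase k (r - x i))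
      (fun i => amp k (r - x i)) hr _ hcon
    have hpos : 0 < k / Real.pi * Real.log k := by positivity
    have e : k / (4 * Real.pi) * Real.log k = k / Real.pi * Real.log k / 4 := by
      field_simp
    linarith
  refine le_iSup_of_le (m + k) (le_iSup_of_le m (le_iSup_of_le (by simp) ?_))
  apply ENNReal.ofReal_le_ofReal
  have hdiff := partialSum_avgDirac x (m + k) r
  rw [show ((QuotientAddGroup.mk r : AddCircle (1 : ℝ))) = (r : AddCircle (1 : ℝ)) from rfl, hdiff,
    partialSum_avgDirac x m r, ← mul_sub, ← Finset.sum_sub_distrib,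
    Finset.sum_congr rfl fun i _ => dirichlet_sub k m (r - x i) (hsin i), ← Complex.ofReal_sum,
    norm_mul, norm_inv, Complex.norm_natCast, Complex.norm_real]
  calc 1 / (16 * Real.pi) * Real.log k
      = ((4 * k : ℕ) : ℝ)⁻¹ * (k / (4 * Real.pi) * Real.log k) := by
        push_cast; field_simp; norm_num
    _ ≤ _ := by
        gcongr
        exact hm.le.trans (le_abs_self _)
end

section
/- Let T be an invertible measure-preserving transformation of a standard (Lebesgue) probability space (X, 𝒜, μ) which is aperiodic, i.e. μ{x : T^n x = x} = 0 for every n ≥ 1. Then for every ε > 0 and every integer n ≥ 1 there exists F ∈ 𝒜 such that the sets F, T⁻¹(F), …, T^{−(n−1)}(F) are pairwise disjoint and μ(F ∪ T⁻¹(F) ∪ … ∪ T^{−(n−1)}(F)) > 1 − ε. -/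
open MeasureTheory
open scoped ENNReal

/-!
The tower base `F` is read off from the hitting time `τ` of a small set `A` which almost every
forward orbit visits: `F` is the set of points where `τ` is a positive multiple of `n`. Since `τ`
drops by one along the orbit until it vanishes, the first `n` preimages of `F` are disjoint
(`tower_disjoint`), and they cover every point with `n ≤ τ < ∞` (`tower_cover`). The points with
`τ < n` have measure at most `n * μ A`.

The set `A` is built in `exists_small_sweeping`. For every `N`, a countable basis of a Polish
topology together with aperiodicity yields countably many sets `D k`, covering almost everything,
each disjoint from its preimages under `T^i`, `1 ≤ i < N`. Let `R k` be the invariant set of points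
whose orbit visits `D k` infinitely often. Put in `A` the points of `D k` whose orbit lies in `R k`
but in no `R l` with `l < k`. By invariance, different `k` do not interact, so `A` is disjoint from
its first `N - 1` preimages and has measure at most `1 / N`; by Poincaré recurrence, almost every
point lies in some `R k` and hence visits `A`.
-/

namespace KakutaniRokhlin

variable {X : Type*}

/-- The points whose first hitting time of `A` under `f` is a positive multiple of `n`. -/
def towerBase (f : X → X) (A : Set X) (n : ℕ) : Set X :=
  {y | ∃ m : ℕ, f^[n * (m + 1)] y ∈ A ∧ ∀ j < n * (m + 1), f^[j] y ∉ A}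

lemma measurableSet_towerBase [MeasurableSpace X] {f : X → X} (hf : Measurable f) {A : Set X}
    (hA : MeasurableSet A) (n : ℕ) : MeasurableSet (towerBase f A n) := by
  have h : towerBase f A n = ⋃ m : ℕ, (f^[n * (m + 1)] ⁻¹' A ∩
      ⋂ j ∈ Finset.range (n * (m + 1)), (f^[j] ⁻¹' A)ᶜ) := by
    ext y
    simp [towerBase]
  rw [h]
  exact MeasurableSet.iUnion fun m => (hf.iterate _ hA).inter
    (Finset.measurableSet_biInter _ fun j _ => (hf.iterate j hA).compl)

lemma tower_disjoint (f : X → X) (A : Set X) {n i j : ℕ} (hij : i < j) (hj : j < n) :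
    Disjoint (f^[i] ⁻¹' towerBase f A n) (f^[j] ⁻¹' towerBase f A n) := by
  rw [Set.disjoint_left]
  rintro x ⟨m, hm, hm'⟩ ⟨p, hp, hp'⟩
  simp only [← Function.iterate_add_apply] at hm hm' hp hp'
  have hn : n ≤ n * (m + 1) := Nat.le_mul_of_pos_right n (by omega)
  have hn' : n ≤ n * (p + 1) := Nat.le_mul_of_pos_right n (by omega)
  -- Both `n * (m + 1) + i` and `n * (p + 1) + j` are the first time at least `j` of a visit to `A`,
  -- so they agree, which is impossible modulo `n`.
  have h1 : n * (m + 1) + i = n * (p + 1) + j := by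
    rcases lt_trichotomy (n * (m + 1) + i) (n * (p + 1) + j) with h | h | h
    · refine absurd ?_ (hp' (n * (m + 1) + i - j) (by omega))
      rwa [Nat.sub_add_cancel (by omega)]
    · exact h
    · refine absurd ?_ (hm' (n * (p + 1) + j - i) (by omega))
      rwa [Nat.sub_add_cancel (by omega)]
  have h2 := congrArg (· % n) h1
  simp only [Nat.mul_add_mod, Nat.mod_eq_of_lt hj, Nat.mod_eq_of_lt (hij.trans hj)] at h2
  omega

lemma tower_cover (f : X → X) (A : Set X) {n : ℕ} (hn : 1 ≤ n) {x : X}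
    (hx : ∃ k, f^[k] x ∈ A) (hlate : ∀ k < n, f^[k] x ∉ A) :
    ∃ i < n, f^[i] x ∈ towerBase f A n := by
  classical
  have hk := Nat.find_spec hx
  have hmin : ∀ j < Nat.find hx, f^[j] x ∉ A := fun j hj => Nat.find_min hx hj
  generalize Nat.find hx = k at hk hmin
  have hnk : n ≤ k := by
    by_contra h
    exact hlate k (by omega) hk
  have hdiv := Nat.div_add_mod k n
  have hpos : 1 ≤ k / n := Nat.div_pos hnk hn
  have hmod := Nat.mod_lt k hn
  refine ⟨k % n, hmod, k / n - 1, ?_, fun j hj => ?_⟩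
  · rw [Nat.sub_add_cancel hpos, ← Function.iterate_add_apply, hdiv]
    exact hk
  · rw [Nat.sub_add_cancel hpos] at hj
    rw [← Function.iterate_add_apply]
    exact hmin _ (by omega)

/-- The points whose forward orbit visits `D` infinitely often. -/
def recurrentSet (f : X → X) (D : Set X) : Set X := {x | ∃ᶠ n in Filter.atTop, f^[n] x ∈ D}

lemma iterate_mem_recurrentSet (f : X → X) (D : Set X) (i : ℕ) (x : X) :
    f^[i] x ∈ recurrentSet f D ↔ x ∈ recurrentSet f D := by
  change (∃ᶠ n in Filter.atTop, f^[n] (f^[i] x) ∈ D) ↔ ∃ᶠ n in Filter.atTop, f^[n] x ∈ D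
  conv_rhs => rw [← Filter.map_add_atTop_eq_nat i, Filter.frequently_map]
  simp only [← Function.iterate_add_apply]

variable [MeasurableSpace X]

/-- Almost every point is separated from its next `N - 1` iterates by one of countably many
measurable sets. -/
lemma exists_separating_cover [StandardBorelSpace X] (μ : Measure X) {f : X → X}
    (hf : Measurable f) (hap : ∀ n : ℕ, 1 ≤ n → μ {x | f^[n] x = x} = 0) (N : ℕ) :
    ∃ D : ℕ → Set X, (∀ k, MeasurableSet (D k)) ∧
      (∀ k, ∀ x ∈ D k, ∀ i, 1 ≤ i → i < N → f^[i] x ∉ D k) ∧ ∀ᵐ x ∂μ, ∃ k, x ∈ D k := by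
  let := upgradeStandardBorel X
  obtain ⟨b, hbc, -, hb⟩ := TopologicalSpace.exists_countable_basis X
  obtain ⟨B, hB⟩ := (hbc.insert ∅).exists_eq_range (Set.insert_nonempty _ _)
  have hBm : ∀ k, MeasurableSet (B k) := fun k => by
    have : B k ∈ insert ∅ b := hB ▸ Set.mem_range_self k
    rcases this with h | h
    · rw [h]; exact MeasurableSet.empty
    · exact (hb.isOpen h).measurableSet
  refine ⟨fun k => B k \ ⋃ i ∈ Finset.Ico 1 N, f^[i] ⁻¹' B k, fun k => ?_, ?_, ?_⟩
  · exact (hBm k).diff (Finset.measurableSet_biUnion _ fun i _ => hf.iterate i (hBm k))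
  · rintro k x ⟨-, hx⟩ i h1 h2 ⟨hi, -⟩
    exact hx (Set.mem_biUnion (Finset.mem_coe.2 (Finset.mem_Ico.2 ⟨h1, h2⟩)) hi)
  · have hae : ∀ᵐ x ∂μ, ∀ i : ℕ, 1 ≤ i → f^[i] x ≠ x := by
      rw [ae_all_iff]
      intro i
      by_cases hi : 1 ≤ i
      · have := measure_eq_zero_iff_ae_notMem.1 (hap i hi)
        filter_upwards [this] with x hx _ using hx
      · exact Filter.Eventually.of_forall fun x h => absurd h hi
    filter_upwards [hae] with x hx
    have hfin : ((fun i => f^[i] x) '' Set.Ico 1 N).Finite := (Set.finite_Ico 1 N).image _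
    have hxs : x ∈ ((fun i => f^[i] x) '' Set.Ico 1 N)ᶜ := by
      rintro ⟨i, hi, hix⟩
      exact hx i hi.1 hix
    obtain ⟨U, hU, hxU, hUs⟩ := hb.exists_subset_of_mem_open hxs
      hfin.isClosed.isOpen_compl
    obtain ⟨k, rfl⟩ : U ∈ Set.range B := hB ▸ Set.mem_insert_of_mem _ hU
    refine ⟨k, hxU, fun h => ?_⟩
    simp only [Set.mem_iUnion] at h
    obtain ⟨i, hi, hiU⟩ := h
    exact hUs hiU ⟨i, Finset.mem_Ico.1 hi, rfl⟩

/-- A set disjoint from its preimages under `f^i`, `1 ≤ i < N`, has measure at most `1 / N`. -/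
lemma card_mul_measure_le (μ : Measure X) [IsProbabilityMeasure μ] {f : X → X}
    (hf : MeasurePreserving f μ μ) {A : Set X} (hA : MeasurableSet A) {N : ℕ}
    (hd : ∀ x ∈ A, ∀ i, 1 ≤ i → i < N → f^[i] x ∉ A) : (N : ℝ≥0∞) * μ A ≤ 1 := by
  have key : ∀ i j, i < j → j < N → Disjoint (f^[i] ⁻¹' A) (f^[j] ⁻¹' A) := by
    intro i j hij hj
    rw [Set.disjoint_left]
    intro x hi hx
    refine hd _ hi (j - i) (by omega) (by omega) ?_
    rw [← Function.iterate_add_apply, Nat.sub_add_cancel hij.le]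
    exact hx
  have hpd : Set.PairwiseDisjoint (↑(Finset.range N)) fun i => f^[i] ⁻¹' A := by
    intro i hi j hj hij
    simp only [Finset.coe_range, Set.mem_Iio] at hi hj
    rcases lt_or_gt_of_ne hij with h | h
    · exact key i j h hj
    · exact (key j i h hi).symm
  have := measure_biUnion_finset (μ := μ) hpd fun i _ => (hf.iterate i).measurable hA
  simp only [(hf.iterate _).measure_preimage hA.nullMeasurableSet, Finset.sum_const,
    Finset.card_range, nsmul_eq_mul] at this
  rw [← this]
  exact prob_le_one

lemma measurableSet_recurrentSet {f : X → X} (hf : Measurable f) {D : Set X}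
    (hD : MeasurableSet D) : MeasurableSet (recurrentSet f D) := by
  have : recurrentSet f D = Filter.limsup (fun n => f^[n] ⁻¹' D) Filter.atTop := by
    ext x
    rw [Filter.mem_limsup_iff_frequently_mem]
    rfl
  rw [this]
  exact MeasurableSet.measurableSet_limsup fun n => hf.iterate n hD

lemma exists_small_sweeping [StandardBorelSpace X] (μ : Measure X) [IsProbabilityMeasure μ]
    {f : X → X} (hf : MeasurePreserving f μ μ)
    (hap : ∀ n : ℕ, 1 ≤ n → μ {x | f^[n] x = x} = 0) (N : ℕ) :
    ∃ A : Set X, MeasurableSet A ∧ (N : ℝ≥0∞) * μ A ≤ 1 ∧ ∀ᵐ x ∂μ, ∃ k, f^[k] x ∈ A := by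
  classical
  obtain ⟨D, hDm, hDd, hDc⟩ := exists_separating_cover μ hf.measurable hap N
  have hRm := fun k => measurableSet_recurrentSet hf.measurable (hDm k)
  let A : Set X := ⋃ k, (D k ∩ recurrentSet f (D k)) \ ⋃ l ∈ Finset.range k, recurrentSet f (D l)
  have hmem : ∀ x, x ∈ A ↔ ∃ k, x ∈ D k ∧ x ∈ recurrentSet f (D k) ∧
      ∀ l < k, x ∉ recurrentSet f (D l) := by
    intro x
    simp [A, and_assoc]
  have hA : MeasurableSet A := MeasurableSet.iUnion fun k =>
    ((hDm k).inter (hRm k)).diff (Finset.measurableSet_biUnion _ fun l _ => hRm l)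
  refine ⟨A, hA, card_mul_measure_le μ hf hA ?_, ?_⟩
  · intro x hx i h1 h2 hi
    obtain ⟨k, hk, hkR, hkl⟩ := (hmem x).1 hx
    obtain ⟨p, hp, hpR, hpl⟩ := (hmem _).1 hi
    simp only [iterate_mem_recurrentSet] at hpR hpl
    have : k = p := by
      rcases lt_trichotomy k p with h | h | h
      · exact absurd hkR (hpl k h)
      · exact h
      · exact absurd hpR (hkl p h)
    subst this
    exact hDd k x hk i h1 h2 hp
  · have hrec : ∀ᵐ x ∂μ, ∀ k, x ∈ D k → x ∈ recurrentSet f (D k) :=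
      ae_all_iff.2 fun k => hf.conservative.ae_mem_imp_frequently_image_mem
        (hDm k).nullMeasurableSet
    filter_upwards [hDc, hrec] with x hx hr
    have hex : ∃ k, x ∈ recurrentSet f (D k) := hx.imp hr
    have hk := Nat.find_spec hex
    obtain ⟨j, hj⟩ := Filter.Frequently.exists hk
    refine ⟨j, (hmem _).2 ⟨Nat.find hex, hj, ?_, fun l hl => ?_⟩⟩
    · rwa [iterate_mem_recurrentSet]
    · rw [iterate_mem_recurrentSet]
      exact Nat.find_min hex hl

end KakutaniRokhlin

open KakutaniRokhlin in
/-- **The Kakutani–Rokhlin lemma** (Lemma 6.1 of the paper).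
If `T` is an aperiodic invertible measure-preserving transformation of a standard probability
space, then for every `ε > 0` and every `n ≥ 1` there exists a measurable set `F` such that
`F, T⁻¹(F), …, T^{-(n-1)}(F)` are pairwise disjoint and their union has measure `> 1 - ε`. -/
theorem kakutani_rokhlin
    {X : Type*} [MeasurableSpace X] [StandardBorelSpace X]
    (μ : Measure X) [IsProbabilityMeasure μ]
    (T : X ≃ᵐ X) (hT : MeasurePreserving T μ μ)
    (hT_aperiodic : ∀ n : ℕ, 1 ≤ n → μ {x | (T : X → X)^[n] x = x} = 0) :
    ∀ ε : ℝ, 0 < ε → ∀ n : ℕ, 1 ≤ n →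
      ∃ F : Set X, MeasurableSet F ∧
        (∀ i j : ℕ, i < n → j < n → i ≠ j →
          Disjoint ((T : X → X)^[i] ⁻¹' F) ((T : X → X)^[j] ⁻¹' F)) ∧
        1 - ENNReal.ofReal ε < μ (⋃ i ∈ Finset.range n, (T : X → X)^[i] ⁻¹' F) := by
  intro ε hε n hn
  -- Shrinking `ε` below `1` keeps the subtraction `1 - ε` in `ℝ≥0∞` from truncating.
  obtain ⟨δ, hδ0, hδ1, hδε⟩ : ∃ δ : ℝ, 0 < δ ∧ δ ≤ 1 ∧ δ ≤ ε :=
    ⟨min ε 1, lt_min hε one_pos, min_le_right _ _, min_le_left _ _⟩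
  obtain ⟨N, hN⟩ := exists_nat_gt (n / δ)
  obtain ⟨A, hA, hNA, hsweep⟩ := exists_small_sweeping μ hT hT_aperiodic N
  have hsmall : (n : ℝ≥0∞) * μ A < ENNReal.ofReal δ := by
    have h1 : (N : ℝ) * μ.real A ≤ 1 := by
      have := ENNReal.toReal_mono ENNReal.one_ne_top hNA
      simpa [Measure.real] using this
    have h2 : (n : ℝ) * μ.real A < δ := by
      rw [div_lt_iff₀ hδ0] at hN
      rcases (measureReal_nonneg (μ := μ) (s := A)).eq_or_lt with h | h
      · rw [← h]; simpa using hδ0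
      · nlinarith [mul_lt_mul_of_pos_right hN h]
    have h3 : (n : ℝ≥0∞) * μ A = ENNReal.ofReal (n * μ.real A) := by
      rw [ENNReal.ofReal_mul (by positivity), ENNReal.ofReal_natCast, ofReal_measureReal]
    rw [h3]
    exact (ENNReal.ofReal_lt_ofReal_iff hδ0).2 h2
  have hF := measurableSet_towerBase hT.measurable hA n
  refine ⟨towerBase T A n, hF, ?_, ?_⟩
  · intro i j hi hj hij
    rcases lt_or_gt_of_ne hij with h | h
    · exact tower_disjoint _ A h hj
    · exact (tower_disjoint _ A h hi).symm
  · refine lt_of_le_of_lt (tsub_le_tsub_left (ENNReal.ofReal_le_ofReal hδε) 1) ?_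
    refine ENNReal.sub_lt_of_lt_add (by simpa using hδ1) ?_
    set U : Set X := ⋃ i ∈ Finset.range n, (T : X → X)^[i] ⁻¹' towerBase T A n with hU
    have hearly : μ (⋃ i ∈ Finset.range n, (T : X → X)^[i] ⁻¹' A) ≤ n * μ A := by
      refine (measure_biUnion_finset_le _ _).trans ?_
      simp [(hT.iterate _).measure_preimage hA.nullMeasurableSet]
    have hUc : μ Uᶜ ≤ n * μ A := by
      refine (measure_mono_ae ?_).trans hearly
      filter_upwards [hsweep] with x hx hxU
      by_contra hxA
      obtain ⟨i, hi, hiF⟩ := tower_cover T A hn hx fun k hk hkA =>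
        hxA (Set.mem_biUnion (Finset.mem_coe.2 (Finset.mem_range.2 hk)) hkA)
      exact hxU (Set.mem_biUnion (Finset.mem_coe.2 (Finset.mem_range.2 hi)) hiF)
    have hle : 1 ≤ μ U + μ Uᶜ := by
      rw [← measure_univ (μ := μ), ← Set.union_compl_self U]
      exact measure_union_le _ _
    exact hle.trans_lt (ENNReal.add_lt_add_left (measure_ne_top μ U) (hUc.trans_lt hsmall))
end

section
/- Let {w_k : k ≥ 1} be nonnegative reals and set A_n f(x) = Σ_{h=1}^n w_h f(τ^h x). Let φ : ℕ → ℕ satisfy φ(n) → ∞ as n → ∞. Assume there exists an infinite set 𝒩 of positive integers such that: (a) Δ_n := min_{1 ≤ h ≤ n − φ(n)} Σ_{k=h}^{h+φ(n)} w_k → ∞ as n → ∞ along 𝒩; and (b) Σ_{n ∈ 𝒩} φ(n)/n < ∞. Then for every η > 0 there exists B ∈ 𝒜 with 0 < μ(B) ≤ η such that limsup_{𝒩 ∋ n → ∞} A_n(χ_B)(x) = ∞ for μ-almost every x ∈ X. -/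
/-!
Fix `n ∈ 𝒩` large and put `N = n / 4`.  If a measurable set `F` has pairwise disjoint preimages
`τ⁻ⁱ F` (`i < N`), then `μ F ≤ 1 / N`.  A greedy construction produces a maximal such `F`, and
maximality forces almost every orbit to meet `F` at some time `h ∈ [1, 2N - 1]`
(`exists_separated_complete`; this weak form of Rokhlin's lemma is all that is needed).  The set
`⋃_{i ≤ φ n} τⁱ F` then has measure at most `16 φ(n) / n`, and almost every `x` satisfies
`τ^k x ∈ ⋃_{i ≤ φ n} τⁱ F` for a whole window `h ≤ k ≤ h + φ n` with `1 ≤ h ≤ n - φ n`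
(`exists_window_set`), so that its `n`-th weighted sum is at least `Δ_n`.

By condition (b) the union `B` of these sets over `n ∈ 𝒩`, `n ≥ n₀`, has measure at most `η` for
`n₀` large, and almost surely `A_n χ_B ≥ Δ_n` for all `n ∈ 𝒩`, `n ≥ n₀`.  Finally `μ B > 0`,
because the sums attached to a null set vanish almost everywhere.
-/

open MeasureTheory Filter
open scoped ENNReal

/-- `S` is `N`-separated: no point of `S` returns to `S` at a time `1 ≤ i < N`. -/
def Separated {X : Type*} (f : X → X) (N : ℕ) (S : Set X) : Prop :=
  ∀ x ∈ S, ∀ i, 1 ≤ i → i < N → f^[i] x ∉ S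

/-- Almost all of the space is covered by countably many measurable `N`-separated sets: a point
with `τⁱ x ≠ x` for `1 ≤ i < N` lies in a basic open set `V` avoiding all these `τⁱ x`, hence in
the separated set `V \ ⋃ᵢ τ⁻ⁱ V`. -/
lemma exists_separated_cover {X : Type*} [MeasurableSpace X] [StandardBorelSpace X]
    (μ : Measure X) (τ : X ≃ᵐ X)
    (hap : ∀ n : ℕ, 1 ≤ n → μ {x | (τ : X → X)^[n] x = x} = 0) (N : ℕ) :
    ∃ U : ℕ → Set X, (∀ j, MeasurableSet (U j)) ∧ (∀ j, Separated τ N (U j)) ∧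
      ∀ᵐ x ∂μ, ∃ j, x ∈ U j := by
  let _ := upgradeStandardBorel X
  obtain ⟨b, hbc, -, hb⟩ := TopologicalSpace.exists_countable_basis X
  obtain ⟨V, hV⟩ := (hbc.insert (∅ : Set X)).exists_eq_range (Set.insert_nonempty _ _)
  have hVm : ∀ j, MeasurableSet (V j) := by
    intro j
    have : V j ∈ insert ∅ b := hV ▸ Set.mem_range_self j
    rcases this with h | h
    · rw [h]; exact MeasurableSet.empty
    · exact (hb.isOpen h).measurableSet
  refine ⟨fun j => V j ∩ ⋂ i ∈ Finset.Ico 1 N, ((τ : X → X)^[i]) ⁻¹' (V j)ᶜ, ?_, ?_, ?_⟩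
  · intro j
    exact (hVm j).inter (Finset.measurableSet_biInter _ fun i _ =>
      (τ.measurable.iterate i) (hVm j).compl)
  · intro j x hx i hi hiN hmem
    have := Set.mem_iInter₂.1 hx.2 i (Finset.mem_Ico.2 ⟨hi, hiN⟩)
    exact this hmem.1
  · have hae : ∀ᵐ x ∂μ, ∀ i : ℕ, 1 ≤ i → (τ : X → X)^[i] x ≠ x := by
      rw [ae_all_iff]
      intro i
      by_cases hi : 1 ≤ i
      · have : ∀ᵐ x ∂μ, ¬ ((τ : X → X)^[i] x = x) := by
          rw [ae_iff]; simpa using hap i hi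
        filter_upwards [this] with x hx _ using hx
      · exact Eventually.of_forall fun x h => absurd h hi
    filter_upwards [hae] with x hx
    have hfin : ((Finset.Ico 1 N : Set ℕ).image fun i => (τ : X → X)^[i] x).Finite :=
      (Finset.finite_toSet _).image _
    have hxm : x ∈ ((Finset.Ico 1 N : Set ℕ).image fun i => (τ : X → X)^[i] x)ᶜ := by
      rintro ⟨i, hi, h⟩
      exact hx i (Finset.mem_Ico.1 hi).1 h
    obtain ⟨C, hCb, hxC, hC⟩ :=
      hb.exists_subset_of_mem_open hxm hfin.isClosed.isOpen_compl
    have : C ∈ Set.range V := hV ▸ Set.mem_insert_of_mem _ hCb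
    obtain ⟨j, rfl⟩ := this
    refine ⟨j, hxC, Set.mem_iInter₂.2 fun i hi hmem => ?_⟩
    exact hC hmem ⟨i, hi, rfl⟩

/-- The greedy union: a point of `U j` is added at step `j + 1` unless its orbit meets the set
built so far at a time `-N < i < N`. -/
def greedy {X : Type*} [MeasurableSpace X] (τ : X ≃ᵐ X) (N : ℕ) (U : ℕ → Set X) : ℕ → Set X
  | 0 => ∅
  | j + 1 => greedy τ N U j ∪
      (U j ∩ ⋂ i ∈ Finset.range N, (((τ : X → X)^[i]) ⁻¹' (greedy τ N U j)ᶜ ∩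
        ((τ.symm : X → X)^[i]) ⁻¹' (greedy τ N U j)ᶜ))

lemma symm_iterate_iterate {X : Type*} [MeasurableSpace X] (τ : X ≃ᵐ X) (i : ℕ) (x : X) :
    (τ.symm : X → X)^[i] ((τ : X → X)^[i] x) = x :=
  (Function.LeftInverse.iterate τ.symm_apply_apply i) x

lemma greedy_measurable {X : Type*} [MeasurableSpace X] (τ : X ≃ᵐ X) (N : ℕ) (U : ℕ → Set X)
    (hU : ∀ j, MeasurableSet (U j)) (j : ℕ) : MeasurableSet (greedy τ N U j) := by
  induction j with
  | zero => exact MeasurableSet.empty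
  | succ j ih =>
    exact ih.union ((hU j).inter (Finset.measurableSet_biInter _ fun i _ =>
      ((τ.measurable.iterate i) ih.compl).inter ((τ.symm.measurable.iterate i) ih.compl)))

lemma greedy_separated {X : Type*} [MeasurableSpace X] (τ : X ≃ᵐ X) (N : ℕ) (U : ℕ → Set X)
    (hU : ∀ j, Separated τ N (U j)) (j : ℕ) : Separated τ N (greedy τ N U j) := by
  induction j with
  | zero => intro x hx; exact absurd hx (Set.notMem_empty x)
  | succ j ih =>
    intro x hx i hi hiN hmem
    rcases hx with hx | ⟨hxU, hx⟩ <;> rcases hmem with hm | ⟨hmU, hm⟩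
    · exact ih x hx i hi hiN hm
    · have := (Set.mem_iInter₂.1 hm i (Finset.mem_range.2 hiN)).2
      apply this
      rw [symm_iterate_iterate]
      exact hx
    · exact (Set.mem_iInter₂.1 hx i (Finset.mem_range.2 hiN)).1 hm
    · exact hU j x hxU i hi hiN hmU

lemma greedy_mono {X : Type*} [MeasurableSpace X] (τ : X ≃ᵐ X) (N : ℕ) (U : ℕ → Set X) :
    Monotone (greedy τ N U) :=
  monotone_nat_of_le_succ fun _ => Set.subset_union_left

/-- The preimages `τ⁻ⁱ S`, `i < N`, of a separated set are disjoint and have equal measure. -/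
lemma Separated.measure_le {X : Type*} [MeasurableSpace X] (μ : Measure X)
    [IsProbabilityMeasure μ] (τ : X ≃ᵐ X) (hτ : MeasurePreserving τ μ μ) {N : ℕ} {S : Set X}
    (hS : MeasurableSet S) (h : Separated τ N S) : N * μ S ≤ 1 := by
  have hlt : ∀ i j, i < j → j < N →
      Disjoint (((τ : X → X)^[i]) ⁻¹' S) (((τ : X → X)^[j]) ⁻¹' S) := by
    intro i j hij hj
    refine Set.disjoint_left.2 fun x hx hx' => ?_
    refine h _ hx (j - i) (by omega) (by omega) ?_
    rw [← Function.iterate_add_apply, Nat.sub_add_cancel hij.le]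
    exact hx'
  have hd : Set.PairwiseDisjoint (↑(Finset.range N)) fun i => ((τ : X → X)^[i]) ⁻¹' S := by
    intro i hi j hj hij
    have hi' := Finset.mem_range.1 hi
    have hj' := Finset.mem_range.1 hj
    rcases lt_or_gt_of_ne hij with h1 | h1
    · exact hlt i j h1 hj'
    · exact (hlt j i h1 hi').symm
  have := measure_biUnion_finset (μ := μ) hd fun i _ => (τ.measurable.iterate i) hS
  have hsum : ∑ i ∈ Finset.range N, μ (((τ : X → X)^[i]) ⁻¹' S) = N * μ S := by
    rw [Finset.sum_congr rfl fun i _ =>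
      (hτ.iterate i).measure_preimage hS.nullMeasurableSet]
    simp
  rw [← hsum, ← this]
  exact prob_le_one

/-- A weak Rokhlin lemma: a set of measure at most `1 / N` that almost every orbit meets at a time
in `[1, 2N - 1]`. -/
lemma exists_separated_complete {X : Type*} [MeasurableSpace X] [StandardBorelSpace X]
    (μ : Measure X) [IsProbabilityMeasure μ] (τ : X ≃ᵐ X) (hτ : MeasurePreserving τ μ μ)
    (hap : ∀ n : ℕ, 1 ≤ n → μ {x | (τ : X → X)^[n] x = x} = 0) (N : ℕ) (hN : 1 ≤ N) :
    ∃ F : Set X, MeasurableSet F ∧ N * μ F ≤ 1 ∧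
      ∀ᵐ x ∂μ, ∃ h, 1 ≤ h ∧ h ≤ 2 * N - 1 ∧ (τ : X → X)^[h] x ∈ F := by
  obtain ⟨U, hUm, hUs, hUc⟩ := exists_separated_cover μ τ hap N
  have hFm : MeasurableSet (⋃ j, greedy τ N U j) :=
    MeasurableSet.iUnion (greedy_measurable τ N U hUm)
  refine ⟨⋃ j, greedy τ N U j, hFm, ?_, ?_⟩
  · refine Separated.measure_le μ τ hτ hFm ?_
    intro x hx i hi hiN hm
    obtain ⟨j, hj⟩ := Set.mem_iUnion.1 hx
    obtain ⟨k, hk⟩ := Set.mem_iUnion.1 hm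
    exact greedy_separated τ N U hUs (max j k) x (greedy_mono τ N U (le_max_left j k) hj) i hi hiN
      (greedy_mono τ N U (le_max_right j k) hk)
  · -- Maximality is applied at `τ^N x`, so that the two-sided visit times become positive.
    filter_upwards [(hτ.iterate N).quasiMeasurePreserving.ae hUc] with x hx
    obtain ⟨j, hj⟩ := hx
    by_cases hmem : (τ : X → X)^[N] x ∈ greedy τ N U (j + 1)
    · exact ⟨N, hN, by omega, Set.mem_iUnion.2 ⟨_, hmem⟩⟩
    · have hnot : ¬ ∀ i < N, (τ : X → X)^[i] ((τ : X → X)^[N] x) ∉ greedy τ N U j ∧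
          (τ.symm : X → X)^[i] ((τ : X → X)^[N] x) ∉ greedy τ N U j := by
        intro hall
        refine hmem (Or.inr ⟨hj, Set.mem_iInter₂.2 fun i hi => ?_⟩)
        exact hall i (Finset.mem_range.1 hi)
      push Not at hnot
      obtain ⟨i, hi, hor⟩ := hnot
      by_cases h1 : (τ : X → X)^[i] ((τ : X → X)^[N] x) ∈ greedy τ N U j
      · refine ⟨i + N, by omega, by omega, Set.mem_iUnion.2 ⟨j, ?_⟩⟩
        rwa [Function.iterate_add_apply]
      · have h2 := hor h1
        refine ⟨N - i, by omega, by omega, Set.mem_iUnion.2 ⟨j, ?_⟩⟩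
        have : (τ : X → X)^[N] x = (τ : X → X)^[i] ((τ : X → X)^[N - i] x) := by
          rw [← Function.iterate_add_apply]; congr 2; omega
        rwa [this, symm_iterate_iterate] at h2

/-- A set of measure at most `8 (p + 1) / n` in which almost every orbit spends `p + 1` consecutive
times, starting at some `h` with `1 ≤ h ≤ n - p`. -/
lemma exists_window_set {X : Type*} [MeasurableSpace X] [StandardBorelSpace X]
    (μ : Measure X) [IsProbabilityMeasure μ] (τ : X ≃ᵐ X) (hτ : MeasurePreserving τ μ μ)
    (hap : ∀ n : ℕ, 1 ≤ n → μ {x | (τ : X → X)^[n] x = x} = 0) (n p : ℕ) (hn : 4 ≤ n)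
    (hp : 2 * p ≤ n) :
    ∃ C : Set X, MeasurableSet C ∧ μ C ≤ ENNReal.ofReal ((p + 1) * (8 / n)) ∧
      ∀ᵐ x ∂μ, ∃ h, 1 ≤ h ∧ h ≤ n - p ∧ ∀ k ∈ Finset.Icc h (h + p), (τ : X → X)^[k] x ∈ C := by
  obtain ⟨F, hFm, hF, hFc⟩ := exists_separated_complete μ τ hτ hap (n / 4) (by omega)
  have hσ : MeasurePreserving τ.symm μ μ := hτ.symm τ
  have hFle : μ F ≤ ENNReal.ofReal (8 / n) := by
    have hN0 : (0 : ℝ) < (n / 4 : ℕ) := by exact_mod_cast (by omega : 0 < n / 4)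
    have hn0 : (0 : ℝ) < n := by exact_mod_cast (by omega : 0 < n)
    have hn8 : (n : ℝ) ≤ 8 * (n / 4 : ℕ) := by exact_mod_cast (by omega : n ≤ 8 * (n / 4))
    have hFr : ((n / 4 : ℕ) : ℝ) * μ.real F ≤ 1 := by
      have := ENNReal.toReal_mono ENNReal.one_ne_top hF
      simpa [Measure.real] using this
    rw [← ofReal_measureReal]
    refine ENNReal.ofReal_le_ofReal ?_
    rw [le_div_iff₀ hn0]
    nlinarith [measureReal_nonneg (μ := μ) (s := F)]
  refine ⟨⋃ i ∈ Finset.range (p + 1), ((τ.symm : X → X)^[i]) ⁻¹' F,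
    Finset.measurableSet_biUnion _ fun i _ => (τ.symm.measurable.iterate i) hFm, ?_, ?_⟩
  · calc _ ≤ ∑ i ∈ Finset.range (p + 1), μ (((τ.symm : X → X)^[i]) ⁻¹' F) :=
          measure_biUnion_finset_le _ _
      _ = (p + 1 : ℕ) * μ F := by
          rw [Finset.sum_congr rfl fun i _ =>
            (hσ.iterate i).measure_preimage hFm.nullMeasurableSet]
          simp
      _ ≤ (p + 1 : ℕ) * ENNReal.ofReal (8 / n) := by gcongr
      _ = _ := by
          rw [ENNReal.ofReal_mul (by positivity)]
          congr 1
          rw [← ENNReal.ofReal_natCast]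
          push_cast
          rfl
  · filter_upwards [hFc] with x ⟨h, h1, h2, h3⟩
    refine ⟨h, h1, by omega, fun k hk => ?_⟩
    obtain ⟨hk1, hk2⟩ := Finset.mem_Icc.1 hk
    refine Set.mem_iUnion₂.2 ⟨k - h, Finset.mem_range.2 (by omega), ?_⟩
    have : (τ : X → X)^[k] x = (τ : X → X)^[k - h] ((τ : X → X)^[h] x) := by
      rw [← Function.iterate_add_apply, Nat.sub_add_cancel hk1]
    rw [Set.mem_preimage, this, symm_iterate_iterate]
    exact h3

/-- **Theorem 6.3 of the paper** (divergence criterion for weighted ergodic sums).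
Let `τ` be an aperiodic invertible measure-preserving transformation of a standard probability
space, `{w_k}` nonnegative reals and `A_n f = ∑_{h=1}^n w_h f ∘ τ^h`.  If `φ(n) → ∞`,
`∑_{n ∈ 𝒩} φ(n)/n < ∞` and `Δ_n = min_{1 ≤ h ≤ n-φ(n)} ∑_{k=h}^{h+φ(n)} w_k → ∞` along `𝒩`,
then for every `η > 0` there is a measurable set `B` with `0 < μ(B) ≤ η` such that
`limsup_{𝒩 ∋ n → ∞} A_n(χ_B) = ∞` almost surely (both the divergence of `Δ_n` and the `limsup`
statement are expressed in the equivalent "eventually/frequently" forms). -/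
theorem weighted_sums_divergence
    {X : Type*} [MeasurableSpace X] [StandardBorelSpace X]
    (μ : Measure X) [IsProbabilityMeasure μ]
    (τ : X ≃ᵐ X) (hτ : MeasurePreserving τ μ μ)
    (hτ_aperiodic : ∀ n : ℕ, 1 ≤ n → μ {x | (τ : X → X)^[n] x = x} = 0)
    (w : ℕ → ℝ) (hw : ∀ k, 0 ≤ w k)
    (φ : ℕ → ℕ) (hφ : Tendsto φ atTop atTop)
    (𝒩 : Set ℕ) (h𝒩 : 𝒩.Infinite)
    -- condition (a): `Δ_n → ∞` along `𝒩`
    (ha : ∀ M : ℝ, ∀ᶠ n in (atTop ⊓ Filter.principal 𝒩),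
      ∀ h : ℕ, 1 ≤ h → h ≤ n - φ n → M ≤ ∑ k ∈ Finset.Icc h (h + φ n), w k)
    -- condition (b)
    (hb : Summable (fun m : 𝒩 => (φ m : ℝ) / (m : ℝ))) :
    ∀ η : ℝ, 0 < η →
      ∃ B : Set X, MeasurableSet B ∧ 0 < μ B ∧ μ B ≤ ENNReal.ofReal η ∧
        ∀ᵐ x ∂μ, ∀ M : ℝ,
          ∃ᶠ n in (atTop ⊓ Filter.principal 𝒩),
            M < ∑ h ∈ Finset.Icc 1 n, w h * B.indicator (fun _ => (1:ℝ)) ((τ : X → X)^[h] x) := by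
  intro η hη
  classical
  set g : ℕ → ℝ := 𝒩.indicator fun n => (φ n : ℝ) / n with hg
  have hgs : Summable g := summable_subtype_iff_indicator.1 hb
  have hg0 : ∀ n, 0 ≤ g n := fun n => Set.indicator_nonneg (fun _ _ => by positivity) n
  have hhalf : ∀ᶠ n in atTop, g n < 1 / 2 :=
    hgs.tendsto_atTop_zero.eventually (gt_mem_nhds (by norm_num))
  have htail : ∀ᶠ m in atTop, ∑' k, g (k + m) < η / 16 :=
    (tendsto_sum_nat_add g).eventually (gt_mem_nhds (by positivity))
  obtain ⟨n₁, hn₁⟩ := eventually_atTop.1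
    (hhalf.and ((eventually_ge_atTop 4).and (hφ.eventually_ge_atTop 1)))
  obtain ⟨n₀, hn₀, hη₀⟩ := ((eventually_ge_atTop n₁).and htail).exists
  have hC : ∀ n : ℕ, ∃ C : Set X, MeasurableSet C ∧ (n₀ ≤ n → μ C ≤ ENNReal.ofReal (16 * g n)) ∧
      (n₀ ≤ n → n ∈ 𝒩 → ∀ᵐ x ∂μ, ∃ h, 1 ≤ h ∧ h ≤ n - φ n ∧
        ∀ k ∈ Finset.Icc h (h + φ n), (τ : X → X)^[k] x ∈ C) := by
    intro n
    by_cases hn : n₀ ≤ n ∧ n ∈ 𝒩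
    · obtain ⟨hlt, h4, h1⟩ := hn₁ n (hn₀.trans hn.1)
      have hgn : g n = (φ n : ℝ) / n := Set.indicator_of_mem hn.2 _
      have hnpos : (0 : ℝ) < n := by exact_mod_cast (by omega : 0 < n)
      have h2 : 2 * φ n ≤ n := by
        rw [hgn, div_lt_iff₀ hnpos] at hlt
        have : (2 * φ n : ℝ) ≤ n := by linarith
        exact_mod_cast this
      obtain ⟨C, hCm, hCμ, hCx⟩ := exists_window_set μ τ hτ hτ_aperiodic n (φ n) h4 h2
      refine ⟨C, hCm, fun _ => hCμ.trans (ENNReal.ofReal_le_ofReal ?_), fun _ _ => hCx⟩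
      have h1' : (1 : ℝ) ≤ φ n := by exact_mod_cast h1
      rw [hgn, ← mul_div_assoc, ← mul_div_assoc]
      exact div_le_div_of_nonneg_right (by linarith) hnpos.le
    · exact ⟨∅, MeasurableSet.empty, fun _ => by simp, fun h h' => absurd ⟨h, h'⟩ hn⟩
  choose C hCm hCμ hCx using hC
  have hBm : MeasurableSet (⋃ k, C (k + n₀)) := MeasurableSet.iUnion fun k => hCm _
  have hmain : ∀ᵐ x ∂μ, ∀ M : ℝ, ∃ᶠ n in (atTop ⊓ Filter.principal 𝒩),
      M < ∑ h ∈ Finset.Icc 1 n, w h *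
        (⋃ k, C (k + n₀)).indicator (fun _ => (1:ℝ)) ((τ : X → X)^[h] x) := by
    have hall : ∀ᵐ x ∂μ, ∀ n, n₀ ≤ n → n ∈ 𝒩 → ∃ h, 1 ≤ h ∧ h ≤ n - φ n ∧
        ∀ k ∈ Finset.Icc h (h + φ n), (τ : X → X)^[k] x ∈ C n := by
      rw [ae_all_iff]
      intro n
      by_cases hn : n₀ ≤ n ∧ n ∈ 𝒩
      · filter_upwards [hCx n hn.1 hn.2] with x hx _ _ using hx
      · exact Eventually.of_forall fun x h h' => absurd ⟨h, h'⟩ hn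
    have : NeBot (atTop ⊓ Filter.principal 𝒩) :=
      frequently_mem_iff_neBot.1 (Nat.frequently_atTop_iff_infinite.2 h𝒩)
    filter_upwards [hall] with x hx M
    refine Eventually.frequently ?_
    filter_upwards [ha (M + 1), mem_inf_of_left (eventually_ge_atTop n₀),
      mem_inf_of_right (mem_principal_self 𝒩)] with n hΔ hn hnN
    obtain ⟨h, h1, h2, h3⟩ := hx n hn hnN
    have hind : ∀ k ∈ Finset.Icc h (h + φ n), w k =
        w k * (⋃ k, C (k + n₀)).indicator (fun _ => (1:ℝ)) ((τ : X → X)^[k] x) := by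
      intro k hk
      rw [Set.indicator_of_mem, mul_one]
      refine Set.mem_iUnion.2 ⟨n - n₀, ?_⟩
      rw [Nat.sub_add_cancel hn]
      exact h3 k hk
    calc M < M + 1 := lt_add_one M
      _ ≤ ∑ k ∈ Finset.Icc h (h + φ n), w k := hΔ h h1 h2
      _ = _ := Finset.sum_congr rfl hind
      _ ≤ _ := by
        refine Finset.sum_le_sum_of_subset_of_nonneg ?_ fun k _ _ =>
          mul_nonneg (hw k) (Set.indicator_nonneg (fun _ _ => zero_le_one) _)
        -- `h ≤ n - φ n` and `1 ≤ h` rule out truncation, so the window ends at or before `n`.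
        exact Finset.Icc_subset_Icc h1 (by omega)
  refine ⟨⋃ k, C (k + n₀), hBm, ?_, ?_, hmain⟩
  · rw [pos_iff_ne_zero]
    intro h0
    have hnull : ∀ᵐ x ∂μ, ∀ h : ℕ, (τ : X → X)^[h] x ∉ ⋃ k, C (k + n₀) := by
      rw [ae_all_iff]
      intro h
      exact (hτ.iterate h).quasiMeasurePreserving.ae (measure_eq_zero_iff_ae_notMem.1 h0)
    obtain ⟨x, hx, hx'⟩ := (hmain.and hnull).exists
    obtain ⟨n, hn⟩ := (hx 0).exists
    rw [Finset.sum_eq_zero fun h _ => by rw [Set.indicator_of_notMem (hx' h), mul_zero]] at hn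
    exact lt_irrefl _ hn
  · have hs : Summable fun k => 16 * g (k + n₀) :=
      ((summable_nat_add_iff n₀).2 hgs).mul_left 16
    calc μ (⋃ k, C (k + n₀)) ≤ ∑' k, μ (C (k + n₀)) := measure_iUnion_le _
      _ ≤ ∑' k, ENNReal.ofReal (16 * g (k + n₀)) :=
        ENNReal.tsum_le_tsum fun k => hCμ _ (Nat.le_add_left _ _)
      _ = ENNReal.ofReal (∑' k, 16 * g (k + n₀)) :=
        (ENNReal.ofReal_tsum_of_nonneg (fun k => mul_nonneg (by norm_num) (hg0 _)) hs).symm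
      _ ≤ ENNReal.ofReal η := by
        refine ENNReal.ofReal_le_ofReal ?_
        rw [tsum_mul_left]
        linarith
end
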